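/- arXiv:2107.02325 — 6 statements merged into one kernel-verified Lean document; each statement's English description precedes it below -/
import Mathlib

section
/- Let f be a ternary cubic form over ℂ. Then f is completely reducible (i.e. f = a·b·c for some linear forms a, b, c) if and only if there exists a constant t ∈ ℂ such that the Hessian determinant det(∂ᵢ∂ⱼ f) of f equals t·f. -/
open MvPolynomial

/-- The Hessian determinant `det (∂ᵢ∂ⱼ f)` of a ternary form. -/
noncomputable def hessianDet (f : MvPolynomial (Fin 3) ℂ) : MvPolynomial (Fin 3) ℂ :=
  Matrix.det (Matrix.of fun i j : Fin 3 => pderiv i (pderiv j f))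

/-- A linear form is a homogeneous polynomial of degree 1. -/
def IsLinearForm (a : MvPolynomial (Fin 3) ℂ) : Prop := a.IsHomogeneous 1

/-- A cubic form is completely reducible if it is a product of three linear forms. -/
def CompletelyReducible (f : MvPolynomial (Fin 3) ℂ) : Prop :=
  ∃ a b c : MvPolynomial (Fin 3) ℂ,
    IsLinearForm a ∧ IsLinearForm b ∧ IsLinearForm c ∧ f = a * b * c

/-- The general ternary cubic with ten coefficients. -/
noncomputable def cub (a0 a1 a2 b0 b1 b2 k0 k1 k2 k3 : ℂ) : MvPolynomial (Fin 3) ℂ :=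
  C a0 * X 0 ^ 3 + C a1 * X 0 ^ 2 * X 1 + C a2 * X 0 ^ 2 * X 2 + C b0 * X 0 * X 1 ^ 2
    + C b1 * X 0 * X 1 * X 2 + C b2 * X 0 * X 2 ^ 2
    + C k0 * X 1 ^ 3 + C k1 * X 1 ^ 2 * X 2 + C k2 * X 1 * X 2 ^ 2 + C k3 * X 2 ^ 3

noncomputable def linf (p q r : ℂ) : MvPolynomial (Fin 3) ℂ := C p * X 0 + C q * X 1 + C r * X 2

lemma linf_lin (p q r : ℂ) : IsLinearForm (linf p q r) := by
  unfold IsLinearForm linf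
  refine IsHomogeneous.add (IsHomogeneous.add ?_ ?_) ?_ <;>
  · exact isHomogeneous_C_mul_X _ _

lemma hom_zero {f : MvPolynomial (Fin 3) ℂ} (hf : f.IsHomogeneous 0) : ∃ c, f = C c :=
  ⟨_, (totalDegree_eq_zero_iff_eq_C.mp (Nat.le_zero.mp hf.totalDegree_le))⟩

lemma hom_succ {f : MvPolynomial (Fin 3) ℂ} {n : ℕ} (hf : f.IsHomogeneous (n + 1)) :
    ∃ g0 g1 g2 : MvPolynomial (Fin 3) ℂ, g0.IsHomogeneous n ∧ g1.IsHomogeneous n ∧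
      g2.IsHomogeneous n ∧ f = g0 * X 0 + g1 * X 1 + g2 * X 2 := by
  have h := hf.sum_X_mul_pderiv
  have hp : ∀ i, (C ((n + 1 : ℂ)⁻¹) * pderiv i f).IsHomogeneous n := by
    intro i
    have := (isHomogeneous_C (Fin 3) ((n + 1 : ℂ)⁻¹)).mul (hf.pderiv (i := i))
    simpa using this
  refine ⟨_, _, _, hp 0, hp 1, hp 2, ?_⟩
  rw [Fin.sum_univ_three] at h
  have hn : (n + 1 : ℂ) ≠ 0 := by exact_mod_cast Nat.succ_ne_zero n
  have h2 : C ((n + 1 : ℂ)⁻¹) * ((n + 1 : ℕ) • f) = f := by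
    rw [nsmul_eq_mul, ← mul_assoc]
    have : ((n + 1 : ℕ) : MvPolynomial (Fin 3) ℂ) = C (n + 1 : ℂ) := by simp
    rw [this, ← C_mul, inv_mul_cancel₀ hn, C_1, one_mul]
  rw [← h] at h2
  refine h2.symm.trans ?_
  ring

lemma lin_form {f : MvPolynomial (Fin 3) ℂ} (hf : f.IsHomogeneous 1) : ∃ p q r, f = linf p q r := by
  obtain ⟨g0, g1, g2, h0, h1, h2, h⟩ := hom_succ (n := 0) hf
  obtain ⟨p, rfl⟩ := hom_zero h0
  obtain ⟨q, rfl⟩ := hom_zero h1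
  obtain ⟨r, rfl⟩ := hom_zero h2
  exact ⟨p, q, r, h⟩

lemma quad_form {f : MvPolynomial (Fin 3) ℂ} (hf : f.IsHomogeneous 2) :
    ∃ a b c d e g, f = C a * X 0 ^ 2 + C b * X 0 * X 1 + C c * X 0 * X 2 + C d * X 1 ^ 2
      + C e * X 1 * X 2 + C g * X 2 ^ 2 := by
  obtain ⟨g0, g1, g2, h0, h1, h2, h⟩ := hom_succ (n := 1) hf
  obtain ⟨p, q, r, rfl⟩ := lin_form h0
  obtain ⟨p', q', r', rfl⟩ := lin_form h1
  obtain ⟨p'', q'', r'', rfl⟩ := lin_form h2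
  refine ⟨p, q + p', r + p'', q', r' + q'', r'', ?_⟩
  rw [h]; simp only [linf, C_add]; ring

lemma cub_form {f : MvPolynomial (Fin 3) ℂ} (hf : f.IsHomogeneous 3) :
    ∃ a0 a1 a2 b0 b1 b2 k0 k1 k2 k3, f = cub a0 a1 a2 b0 b1 b2 k0 k1 k2 k3 := by
  obtain ⟨g0, g1, g2, h0, h1, h2, h⟩ := hom_succ (n := 2) hf
  obtain ⟨a, b, c, d, e, g, rfl⟩ := quad_form h0
  obtain ⟨a', b', c', d', e', g', rfl⟩ := quad_form h1
  obtain ⟨a'', b'', c'', d'', e'', g'', rfl⟩ := quad_form h2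
  refine ⟨a, b + a', c + a'', d + b', e + c' + b'', g + c'', d', e' + d'', g' + e'', g'', ?_⟩
  rw [h]; simp only [cub, C_add]; ring

/-- Linear substitution. -/
noncomputable def lsub (A : Matrix (Fin 3) (Fin 3) ℂ) :
    MvPolynomial (Fin 3) ℂ →ₐ[ℂ] MvPolynomial (Fin 3) ℂ :=
  aeval (fun j => linf (A j 0) (A j 1) (A j 2))

lemma lsub_hom (A : Matrix (Fin 3) (Fin 3) ℂ) {f : MvPolynomial (Fin 3) ℂ} {n : ℕ}
    (hf : f.IsHomogeneous n) : (lsub A f).IsHomogeneous n := by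
  have := hf.aeval (fun j => linf (A j 0) (A j 1) (A j 2)) (n := 1) (fun j => linf_lin _ _ _)
  simpa [lsub] using this

lemma pderiv_linf (i : Fin 3) (v : Fin 3 → ℂ) : pderiv i (linf (v 0) (v 1) (v 2)) = C (v i) := by
  fin_cases i <;> simp [linf, pderiv_X]

lemma chain (A : Matrix (Fin 3) (Fin 3) ℂ) (i : Fin 3) (f : MvPolynomial (Fin 3) ℂ) :
    pderiv i (lsub A f) = ∑ j, C (A j i) * lsub A (pderiv j f) := by
  induction f using MvPolynomial.induction_on with
  | C a => simp [lsub]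
  | add p q hp hq => simp only [map_add, hp, hq, mul_add, Finset.sum_add_distrib]
  | mul_X p k hp =>
    have hk : lsub A (X k) = linf (A k 0) (A k 1) (A k 2) := by simp [lsub]
    have h1 : pderiv i (lsub A (X k)) = C (A k i) := by rw [hk]; exact pderiv_linf i (A k)
    rw [map_mul, Derivation.leibniz, hp, h1]
    simp only [Derivation.leibniz, map_add, smul_eq_mul, map_mul, mul_add,
      Finset.sum_add_distrib, pderiv_X]
    have h2 : ∀ j, lsub A ((Pi.single j 1 : Fin 3 → MvPolynomial (Fin 3) ℂ) k)
        = if k = j then 1 else 0 := by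
      intro j; rw [Pi.single_apply]; split_ifs <;> simp
    simp only [h2]
    rw [Finset.mul_sum]
    refine congrArg₂ (fun u v => u + v) ?_ ?_
    · simp only [mul_ite, mul_one, mul_zero, Finset.sum_ite_eq, Finset.mem_univ, if_true]
      exact mul_comm _ _
    · refine Finset.sum_congr rfl (fun j _ => ?_)
      exact mul_left_comm _ _ _

lemma hess_lsub (A : Matrix (Fin 3) (Fin 3) ℂ) (f : MvPolynomial (Fin 3) ℂ) :
    hessianDet (lsub A f) = C (A.det ^ 2) * lsub A (hessianDet f) := by
  have hM : (Matrix.of fun i j : Fin 3 => pderiv i (pderiv j (lsub A f)))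
      = (A.map C).transpose * ((Matrix.of fun i j : Fin 3 => pderiv i (pderiv j f)).map (lsub A))
        * (A.map C) := by
    ext1 i j
    simp only [Matrix.of_apply, chain, map_sum, Derivation.leibniz, Matrix.mul_apply,
      Matrix.map_apply, Matrix.transpose_apply, smul_eq_mul, pderiv_C, mul_zero, add_zero]
    refine Finset.sum_congr rfl (fun k _ => ?_)
    rw [mul_comm]
  have hd : (A.map (C : ℂ →+* MvPolynomial (Fin 3) ℂ)).det = C A.det :=
    (RingHom.map_det C A).symm
  have hd2 : ((Matrix.of fun i j : Fin 3 => pderiv i (pderiv j f)).map (lsub A)).det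
      = lsub A (hessianDet f) := ((lsub A).map_det _).symm
  rw [hessianDet, hM, Matrix.det_mul, Matrix.det_mul, Matrix.det_transpose, hd, hd2, C_pow]
  ring

def Good (f : MvPolynomial (Fin 3) ℂ) : Prop :=
  f.IsHomogeneous 3 ∧ ∃ t : ℂ, hessianDet f = C t * f

lemma Good.lsub {f : MvPolynomial (Fin 3) ℂ} (h : Good f) (A : Matrix (Fin 3) (Fin 3) ℂ) :
    Good (lsub A f) := by
  obtain ⟨h1, t, ht⟩ := h
  refine ⟨lsub_hom A h1, A.det ^ 2 * t, ?_⟩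
  rw [hess_lsub, ht, map_mul, C_mul, ← mul_assoc]
  simp [_root_.lsub]

lemma eval_lsub (A : Matrix (Fin 3) (Fin 3) ℂ) (f : MvPolynomial (Fin 3) ℂ) (v : Fin 3 → ℂ) :
    eval v (lsub A f) = eval (A.mulVec v) f := by
  induction f using MvPolynomial.induction_on with
  | C a => simp [lsub]
  | add p q hp hq => simp only [map_add, hp, hq]
  | mul_X p k hp =>
    simp only [map_mul, hp]
    simp [lsub, linf, Matrix.mulVec, dotProduct, Fin.sum_univ_three]

lemma CR_lsub {f : MvPolynomial (Fin 3) ℂ} (A : Matrix (Fin 3) (Fin 3) ℂ) (hA : A.det ≠ 0)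
    (h : CompletelyReducible (lsub A f)) : CompletelyReducible f := by
  obtain ⟨a, b, c, ha, hb, hc, h⟩ := h
  refine ⟨lsub A⁻¹ a, lsub A⁻¹ b, lsub A⁻¹ c, lsub_hom _ ha, lsub_hom _ hb, lsub_hom _ hc, ?_⟩
  rw [← map_mul, ← map_mul, ← h]
  apply MvPolynomial.funext
  intro v
  rw [eval_lsub, eval_lsub, Matrix.mulVec_mulVec, Matrix.mul_nonsing_inv _ (isUnit_iff_ne_zero.mpr hA),
    Matrix.one_mulVec]

lemma eval_cub (a0 a1 a2 b0 b1 b2 k0 k1 k2 k3 x y z : ℂ) :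
    eval ![x, y, z] (cub a0 a1 a2 b0 b1 b2 k0 k1 k2 k3) =
    a0 * x ^ 3 + a1 * x ^ 2 * y + a2 * x ^ 2 * z + b0 * x * y ^ 2
    + b1 * x * y * z + b2 * x * z ^ 2
    + k0 * y ^ 3 + k1 * y ^ 2 * z + k2 * y * z ^ 2 + k3 * z ^ 3 := by
  simp [cub]

lemma pderiv_cub (i : Fin 3) (a0 a1 a2 b0 b1 b2 k0 k1 k2 k3 : ℂ) :
    pderiv i (cub a0 a1 a2 b0 b1 b2 k0 k1 k2 k3) =
    ![C (3 * a0) * X 0 ^ 2 + C (2 * a1) * X 0 * X 1 + C (2 * a2) * X 0 * X 2 + C b0 * X 1 ^ 2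
      + C b1 * X 1 * X 2 + C b2 * X 2 ^ 2,
      C a1 * X 0 ^ 2 + C (2 * b0) * X 0 * X 1 + C b1 * X 0 * X 2 + C (3 * k0) * X 1 ^ 2
      + C (2 * k1) * X 1 * X 2 + C k2 * X 2 ^ 2,
      C a2 * X 0 ^ 2 + C b1 * X 0 * X 1 + C (2 * b2) * X 0 * X 2 + C k1 * X 1 ^ 2
      + C (2 * k2) * X 1 * X 2 + C (3 * k3) * X 2 ^ 2] i := by
  have e2 : (C 2 : MvPolynomial (Fin 3) ℂ) = 2 := map_ofNat C 2
  have e3 : (C 3 : MvPolynomial (Fin 3) ℂ) = 3 := map_ofNat C 3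
  fin_cases i <;>
  · simp [cub, pderiv_X, Derivation.leibniz, Derivation.leibniz_pow, e2, e3]
    ring

lemma eval_hess_cub (a0 a1 a2 b0 b1 b2 k0 k1 k2 k3 x y z : ℂ) :
    eval ![x, y, z] (hessianDet (cub a0 a1 a2 b0 b1 b2 k0 k1 k2 k3)) =
    (6 * a0 * x + 2 * a1 * y + 2 * a2 * z) *
      ((2 * b0 * x + 6 * k0 * y + 2 * k1 * z) * (2 * b2 * x + 2 * k2 * y + 6 * k3 * z)
        - (b1 * x + 2 * k1 * y + 2 * k2 * z) ^ 2)
    - (2 * a1 * x + 2 * b0 * y + b1 * z) ^ 2 * (2 * b2 * x + 2 * k2 * y + 6 * k3 * z)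
    + 2 * (2 * a1 * x + 2 * b0 * y + b1 * z) * (2 * a2 * x + b1 * y + 2 * b2 * z)
      * (b1 * x + 2 * k1 * y + 2 * k2 * z)
    - (2 * a2 * x + b1 * y + 2 * b2 * z) ^ 2 * (2 * b0 * x + 6 * k0 * y + 2 * k1 * z) := by
  rw [hessianDet, Matrix.det_fin_three]
  simp only [Matrix.of_apply, pderiv_cub]
  simp [pderiv_X, Derivation.leibniz, Derivation.leibniz_pow]
  ring

lemma Good.eq {a0 a1 a2 b0 b1 b2 k0 k1 k2 k3 : ℂ} (h : Good (cub a0 a1 a2 b0 b1 b2 k0 k1 k2 k3)) :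
    ∃ t : ℂ, ∀ x y z : ℂ,
    (6 * a0 * x + 2 * a1 * y + 2 * a2 * z) *
      ((2 * b0 * x + 6 * k0 * y + 2 * k1 * z) * (2 * b2 * x + 2 * k2 * y + 6 * k3 * z)
        - (b1 * x + 2 * k1 * y + 2 * k2 * z) ^ 2)
    - (2 * a1 * x + 2 * b0 * y + b1 * z) ^ 2 * (2 * b2 * x + 2 * k2 * y + 6 * k3 * z)
    + 2 * (2 * a1 * x + 2 * b0 * y + b1 * z) * (2 * a2 * x + b1 * y + 2 * b2 * z)
      * (b1 * x + 2 * k1 * y + 2 * k2 * z)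
    - (2 * a2 * x + b1 * y + 2 * b2 * z) ^ 2 * (2 * b0 * x + 6 * k0 * y + 2 * k1 * z)
    = t * (a0 * x ^ 3 + a1 * x ^ 2 * y + a2 * x ^ 2 * z + b0 * x * y ^ 2
    + b1 * x * y * z + b2 * x * z ^ 2
    + k0 * y ^ 3 + k1 * y ^ 2 * z + k2 * y * z ^ 2 + k3 * z ^ 3) := by
  obtain ⟨_, t, ht⟩ := h
  refine ⟨t, fun x y z => ?_⟩
  rw [← eval_hess_cub, ht, map_mul, eval_C, eval_cub]

lemma CR_of_eval {f : MvPolynomial (Fin 3) ℂ} (p q r p' q' r' p'' q'' r'' : ℂ)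
    (h : ∀ x y z, eval ![x, y, z] f = (p * x + q * y + r * z) * (p' * x + q' * y + r' * z)
      * (p'' * x + q'' * y + r'' * z)) : CompletelyReducible f := by
  refine ⟨linf p q r, linf p' q' r', linf p'' q'' r'', linf_lin _ _ _, linf_lin _ _ _,
    linf_lin _ _ _, ?_⟩
  apply MvPolynomial.funext
  intro v
  have hv : v = ![v 0, v 1, v 2] := by ext i; fin_cases i <;> rfl
  rw [hv, h]
  simp [linf]

lemma root_cubic (a b c d : ℂ) (ha : a ≠ 0) : ∃ r : ℂ, a * r ^ 3 + b * r ^ 2 + c * r + d = 0 := by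
  obtain ⟨r, hr⟩ := IsAlgClosed.exists_root
    (Polynomial.C a * Polynomial.X ^ 3 + Polynomial.C b * Polynomial.X ^ 2
      + Polynomial.C c * Polynomial.X + Polynomial.C d) (by
      rw [Polynomial.degree_cubic ha]; decide)
  exact ⟨r, by simpa using hr⟩

lemma root_quad (a b c : ℂ) (ha : a ≠ 0) : ∃ r : ℂ, a * r ^ 2 + b * r + c = 0 := by
  obtain ⟨r, hr⟩ := IsAlgClosed.exists_root
    (Polynomial.C a * Polynomial.X ^ 2 + Polynomial.C b * Polynomial.X + Polynomial.C c) (by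
      rw [Polynomial.degree_quadratic ha]; decide)
  exact ⟨r, by simpa using hr⟩

lemma split_quad (a b c : ℂ) : ∃ p q r s : ℂ, a = p * r ∧ b = p * s + q * r ∧ c = q * s := by
  by_cases ha : a = 0
  · exact ⟨0, 1, b, c, by simp [ha], by ring, by ring⟩
  · obtain ⟨r, hr⟩ := root_quad a b c ha
    refine ⟨1, -r, a, b + a * r, by ring, by ring, ?_⟩
    linear_combination hr

lemma split_cubic (a b c d : ℂ) : ∃ p q a' b' c' : ℂ, a = p * a' ∧ b = p * b' + q * a' ∧
    c = p * c' + q * b' ∧ d = q * c' := by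
  by_cases ha : a = 0
  · exact ⟨0, 1, b, c, d, by simp [ha], by ring, by ring, by ring⟩
  · obtain ⟨r, hr⟩ := root_cubic a b c d ha
    refine ⟨1, -r, a, b + a * r, c + b * r + a * r ^ 2, by ring, by ring, by ring, ?_⟩
    linear_combination hr

lemma caseK (k0 k1 k2 k3 : ℂ) : CompletelyReducible (cub 0 0 0 0 0 0 k0 k1 k2 k3) := by
  obtain ⟨p, q, a, b, c, rfl, rfl, rfl, rfl⟩ := split_cubic k0 k1 k2 k3
  obtain ⟨p', q', r, s, rfl, rfl, rfl⟩ := split_quad a b c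
  refine CR_of_eval 0 p q 0 p' q' 0 r s (fun x y z => ?_)
  rw [eval_cub]; ring

lemma caseQ {a b k0 k1 k2 k3 : ℂ} (hab : a ≠ 0 ∨ b ≠ 0)
    (h : Good (cub 0 0 0 a b 0 k0 k1 k2 k3)) : CompletelyReducible (cub 0 0 0 a b 0 k0 k1 k2 k3) := by
  obtain ⟨t, ht⟩ := h.eq
  have e1 : (2 * b ^ 2 - t) * a = 0 := by
    linear_combination (ht 1 1 0 - ht (-1) 1 0) / 2
  have e2 : (2 * b ^ 2 - t) * b = 0 := by
    linear_combination (ht 1 1 1 - ht (-1) 1 1) / 2 - (ht 1 1 0 - ht (-1) 1 0) / 2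
  have et : t = 2 * b ^ 2 := by
    rcases hab with h | h
    · have := (mul_eq_zero.mp e1).resolve_right h
      linear_combination -this
    · have := (mul_eq_zero.mp e2).resolve_right h
      linear_combination -this
  subst et
  have z1 := ht 0 0 1
  have z2 := ht 0 1 0
  have z3 := ht 0 1 1
  have z4 := ht 0 1 (-1)
  ring_nf at z1 z2 z3 z4
  have f1 : b ^ 2 * k3 = 0 := by linear_combination -z1 / 8
  have f2 : a ^ 2 * k3 = 0 := by linear_combination (z3 - z4) / (-48) - f1 / 3
  have hk3 : k3 = 0 := by
    rcases hab with h | h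
    · exact (mul_eq_zero.mp f2).resolve_left (pow_ne_zero 2 h)
    · exact (mul_eq_zero.mp f1).resolve_left (pow_ne_zero 2 h)
  have f3 : a * b * k1 - a ^ 2 * k2 = b ^ 2 * k0 := by linear_combination z2 / 8
  subst hk3
  by_cases hb : b = 0
  · subst hb
    have ha : a ≠ 0 := by simpa using hab
    have : k2 = 0 := by
      have : a ^ 2 * k2 = 0 := by linear_combination -f3
      exact (mul_eq_zero.mp this).resolve_left (pow_ne_zero 2 ha)
    subst this
    refine CR_of_eval 0 1 0 0 1 0 a k0 k1 (fun x y z => ?_)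
    rw [eval_cub]; ring
  · obtain ⟨v, rfl⟩ : ∃ v, k2 = b * v := ⟨k2 / b, by field_simp⟩
    obtain ⟨u, rfl⟩ : ∃ u, k1 = b * u + a * v := ⟨(k1 - a * v) / b, by field_simp; ring⟩
    have hk0 : k0 = a * u := by
      apply mul_left_cancel₀ (pow_ne_zero 2 hb)
      linear_combination -f3
    subst hk0
    refine CR_of_eval 0 1 0 0 a b 1 u v (fun x y z => ?_)
    rw [eval_cub]; ring

lemma caseL {b2 k0 k1 k2 k3 : ℂ} 
    (h : Good (cub 0 1 0 0 0 b2 k0 k1 k2 k3)) : CompletelyReducible (cub 0 1 0 0 0 b2 k0 k1 k2 k3) := by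
  obtain ⟨t, ht⟩ := h.eq
  have e1 : b2 = 0 := by linear_combination ht 1 0 0 / (-8)
  subst e1
  have e2 : k3 = 0 := by linear_combination (ht 1 0 1 - ht 0 0 1) / (-24)
  subst e2
  have e3 : t = -8 * k2 := by linear_combination -(ht 1 1 0 - ht 0 1 0)
  subst e3
  have e4 : 4 * k0 * k2 = k1 ^ 2 := by linear_combination ht 0 1 0 / 8
  obtain ⟨m, n, h1, h2, h3⟩ : ∃ m n : ℂ, k2 = - m ^ 2 ∧ k1 = - 2 * m * n ∧ k0 = - n ^ 2 := by
    obtain ⟨m, hm⟩ := IsAlgClosed.exists_pow_nat_eq (-k2) (n := 2) (by norm_num)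
    by_cases hk : k2 = 0
    · subst hk
      obtain ⟨n, hn⟩ := IsAlgClosed.exists_pow_nat_eq (-k0) (n := 2) (by norm_num)
      have : k1 = 0 := by simpa using e4.symm
      exact ⟨0, n, by simp, by simp [this], by linear_combination hn⟩
    · have hm0 : m ≠ 0 := by rintro rfl; apply hk; linear_combination hm
      have hk2 : k2 = - m ^ 2 := by linear_combination hm
      obtain ⟨n, rfl⟩ : ∃ n, k1 = -2 * m * n := ⟨k1 / (-2 * m), by field_simp⟩
      refine ⟨m, n, hk2, rfl, ?_⟩
      apply mul_left_cancel₀ (pow_ne_zero 2 hm0)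
      linear_combination -e4 / 4 + k0 * hk2
  subst h1 h2 h3
  refine CR_of_eval 0 1 0 1 n m 1 (-n) (-m) (fun x y z => ?_)
  rw [eval_cub]; ring

lemma eval_lsub' (A : Matrix (Fin 3) (Fin 3) ℂ) (f : MvPolynomial (Fin 3) ℂ) (x y z : ℂ) :
    eval ![x, y, z] (lsub A f) = eval ![A 0 0 * x + A 0 1 * y + A 0 2 * z,
      A 1 0 * x + A 1 1 * y + A 1 2 * z, A 2 0 * x + A 2 1 * y + A 2 2 * z] f := by
  rw [eval_lsub]
  congr 2
  ext i
  fin_cases i <;> simp [Matrix.mulVec, dotProduct, Fin.sum_univ_three]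

lemma caseL1 {b0 b1 b2 k0 k1 k2 k3 : ℂ}
    (h : Good (cub 0 1 0 b0 b1 b2 k0 k1 k2 k3)) :
    CompletelyReducible (cub 0 1 0 b0 b1 b2 k0 k1 k2 k3) := by
  let A : Matrix (Fin 3) (Fin 3) ℂ := !![1, -b0 / 2, -b1 / 2; 0, 1, 0; 0, 0, 1]
  apply CR_lsub A (by simp [A, Matrix.det_fin_three])
  have hg := h.lsub A
  have he := eval_lsub' A (cub 0 1 0 b0 b1 b2 k0 k1 k2 k3)
  obtain ⟨a0', a1', a2', b0', b1', b2', k0', k1', k2', k3', e⟩ := cub_form hg.1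
  rw [e] at hg he ⊢
  simp only [eval_cub] at he
  simp [A] at he
  obtain rfl : a0' = 0 := by linear_combination he 1 0 0
  obtain rfl : a1' = 1 := by linear_combination (he 1 1 0 + he (-1) 1 0) / 2 - he 0 1 0
  obtain rfl : a2' = 0 := by linear_combination (he 1 0 1 + he (-1) 0 1) / 2 - he 0 0 1
  obtain rfl : b0' = 0 := by linear_combination (he 1 1 0 - he (-1) 1 0) / 2
  obtain rfl : b1' = 0 := by
    linear_combination (he 1 1 1 - he (-1) 1 1) / 2 - (he 1 0 1 - he (-1) 0 1) / 2
  exact caseL hg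

/-- A change of the last two coordinates taking a nonzero linear form to the second coordinate. -/
lemma exists_A (p q : ℂ) (h : p ≠ 0 ∨ q ≠ 0) : ∃ s u v w : ℂ, s * w - u * v ≠ 0 ∧
    p * s + q * v = 1 ∧ p * u + q * w = 0 := by
  by_cases hp : p = 0
  · subst hp
    have hq : q ≠ 0 := by simpa using h
    exact ⟨0, 1, q⁻¹, 0, by simp [hq], by field_simp; ring, by ring⟩
  · exact ⟨p⁻¹, -q / p, 0, 1, by simp [hp], by field_simp; ring, by field_simp; ring⟩

lemma case0 {a1 a2 b0 b1 b2 k0 k1 k2 k3 : ℂ}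
    (h : Good (cub 0 a1 a2 b0 b1 b2 k0 k1 k2 k3)) :
    CompletelyReducible (cub 0 a1 a2 b0 b1 b2 k0 k1 k2 k3) := by
  by_cases hL : a1 ≠ 0 ∨ a2 ≠ 0
  · obtain ⟨s, u, v, w, hd, h1, h2⟩ := exists_A a1 a2 hL
    let A : Matrix (Fin 3) (Fin 3) ℂ := !![1, 0, 0; 0, s, u; 0, v, w]
    apply CR_lsub A (by simpa [A, Matrix.det_fin_three] using hd)
    have hg := h.lsub A
    have he := eval_lsub' A (cub 0 a1 a2 b0 b1 b2 k0 k1 k2 k3)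
    obtain ⟨a0', a1', a2', b0', b1', b2', k0', k1', k2', k3', e⟩ := cub_form hg.1
    rw [e] at hg he ⊢
    simp only [eval_cub] at he
    simp [A] at he
    obtain rfl : a0' = 0 := by linear_combination he 1 0 0
    obtain rfl : a1' = 1 := by linear_combination (he 1 1 0 + he (-1) 1 0) / 2 - he 0 1 0 + h1
    obtain rfl : a2' = 0 := by linear_combination (he 1 0 1 + he (-1) 0 1) / 2 - he 0 0 1 + h2
    exact caseL1 hg
  · push Not at hL
    obtain ⟨rfl, rfl⟩ := hL
    obtain ⟨p, q, r, m, rfl, rfl, rfl⟩ := split_quad b0 b1 b2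
    by_cases hQ : (p ≠ 0 ∨ q ≠ 0) ∧ (r ≠ 0 ∨ m ≠ 0)
    · obtain ⟨hpq, hrm⟩ := hQ
      obtain ⟨s, u, v, w, hd, h1, h2⟩ := exists_A p q hpq
      let A : Matrix (Fin 3) (Fin 3) ℂ := !![1, 0, 0; 0, s, u; 0, v, w]
      apply CR_lsub A (by simpa [A, Matrix.det_fin_three] using hd)
      have hg := h.lsub A
      have he := eval_lsub' A (cub 0 0 0 (p * r) (p * m + q * r) (q * m) k0 k1 k2 k3)
      obtain ⟨a0', a1', a2', b0', b1', b2', k0', k1', k2', k3', e⟩ := cub_form hg.1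
      rw [e] at hg he ⊢
      simp only [eval_cub] at he
      simp [A] at he
      obtain rfl : a0' = 0 := by linear_combination he 1 0 0
      obtain rfl : a1' = 0 := by linear_combination (he 1 1 0 + he (-1) 1 0) / 2 - he 0 1 0
      obtain rfl : a2' = 0 := by linear_combination (he 1 0 1 + he (-1) 0 1) / 2 - he 0 0 1
      obtain rfl : b2' = 0 := by
        linear_combination (he 1 0 1 - he (-1) 0 1) / 2 + (r * u + m * w) * h2
      have hb0 : b0' = r * s + m * v := by
        linear_combination (he 1 1 0 - he (-1) 1 0) / 2 + (r * s + m * v) * h1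
      have hb1 : b1' = r * u + m * w := by
        linear_combination (he 1 1 1 - he (-1) 1 1) / 2 - (he 1 1 0 - he (-1) 1 0) / 2
          + (r * u + m * w) * h1 + (r * s + m * v) * h2 + (r * u + m * w) * h2
      refine caseQ ?_ hg
      by_contra hc
      push Not at hc
      obtain ⟨c0, c1⟩ := hc
      rw [c0] at hb0
      rw [c1] at hb1
      have hr : (s * w - u * v) * r = 0 := by linear_combination v * hb1 - w * hb0
      have hm : (s * w - u * v) * m = 0 := by linear_combination u * hb0 - s * hb1
      rcases hrm with h' | h'
      · exact h' ((mul_eq_zero.mp hr).resolve_left hd)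
      · exact h' ((mul_eq_zero.mp hm).resolve_left hd)
    · have hz : p * r = 0 ∧ p * m + q * r = 0 ∧ q * m = 0 := by
        by_cases hpq : p ≠ 0 ∨ q ≠ 0
        · have : ¬ (r ≠ 0 ∨ m ≠ 0) := fun h' => hQ ⟨hpq, h'⟩
          push Not at this
          simp [this.1, this.2]
        · push Not at hpq
          simp [hpq.1, hpq.2]
      rw [hz.1, hz.2.1, hz.2.2]
      exact caseK _ _ _ _

lemma good_CR {f : MvPolynomial (Fin 3) ℂ} (h : Good f) : CompletelyReducible f := by
  obtain ⟨a0, a1, a2, b0, b1, b2, k0, k1, k2, k3, rfl⟩ := cub_form h.1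
  by_cases ha : a0 = 0
  · subst ha; exact case0 h
  · obtain ⟨r, hr⟩ := root_cubic a0 a1 b0 k0 ha
    let A : Matrix (Fin 3) (Fin 3) ℂ := !![r, 1, 0; 1, 0, 0; 0, 0, 1]
    apply CR_lsub A (by simp [A, Matrix.det_fin_three])
    have hg := h.lsub A
    have he := eval_lsub' A (cub a0 a1 a2 b0 b1 b2 k0 k1 k2 k3)
    obtain ⟨a0', a1', a2', b0', b1', b2', k0', k1', k2', k3', e⟩ := cub_form hg.1
    rw [e] at hg he ⊢
    simp only [eval_cub] at he
    simp [A] at he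
    obtain rfl : a0' = 0 := by linear_combination he 1 0 0 + hr
    exact case0 hg

lemma CR_good {f : MvPolynomial (Fin 3) ℂ} (h : CompletelyReducible f) :
    ∃ t : ℂ, hessianDet f = C t * f := by
  obtain ⟨a, b, c, ha, hb, hc, rfl⟩ := h
  obtain ⟨a0, a1, a2, rfl⟩ := lin_form ha
  obtain ⟨b0, b1, b2, rfl⟩ := lin_form hb
  obtain ⟨c0, c1, c2, rfl⟩ := lin_form hc
  have ea := fun i => pderiv_linf i ![a0, a1, a2]
  have eb := fun i => pderiv_linf i ![b0, b1, b2]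
  have ec := fun i => pderiv_linf i ![c0, c1, c2]
  simp at ea eb ec
  refine ⟨2 * (a0 * (b1 * c2 - b2 * c1) - a1 * (b0 * c2 - b2 * c0)
    + a2 * (b0 * c1 - b1 * c0)) ^ 2, ?_⟩
  have e2 : (C 2 : MvPolynomial (Fin 3) ℂ) = 2 := map_ofNat C 2
  rw [hessianDet, Matrix.det_fin_three]
  generalize linf a0 a1 a2 = a at *
  generalize linf b0 b1 b2 = b at *
  generalize linf c0 c1 c2 = c at *
  simp [Derivation.leibniz, ea, eb, ec, e2]
  ring

theorem stmt0 (f : MvPolynomial (Fin 3) ℂ) (hf : f.IsHomogeneous 3) :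
    CompletelyReducible f ↔ ∃ t : ℂ, hessianDet f = C t * f :=
  ⟨CR_good, fun h => good_CR ⟨hf, h⟩⟩
end

section
/- Let f be a ternary cubic form over ℂ and let D = det(∂ᵢ∂ⱼ f) be its Hessian determinant. Then f is completely reducible if and only if for every vector (u₁,u₂,u₃) ∈ ℂ³ the determinant of the 3×3 matrix with rows (∂₁D, ∂₂D, ∂₃D), (∂₁f, ∂₂f, ∂₃f), (u₁, u₂, u₃) is the zero polynomial (i.e. the Jacobian of D, f and every linear form vanishes identically). -/
open MvPolynomial

namespace CubicAux

/-- Linear substitution. -/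
noncomputable def sub (M : Matrix (Fin 3) (Fin 3) ℂ) :
    MvPolynomial (Fin 3) ℂ →ₐ[ℂ] MvPolynomial (Fin 3) ℂ :=
  aeval (fun j => C (M j 0) * X 0 + C (M j 1) * X 1 + C (M j 2) * X 2)

lemma sub_X (M) (j : Fin 3) :
    sub M (X j) = C (M j 0) * X 0 + C (M j 1) * X 1 + C (M j 2) * X 2 := by
  simp [sub]

lemma sub_C (M) (a : ℂ) : sub M (C a) = C a := by
  simp [sub]

lemma pderiv_sub (M) (i : Fin 3) (f : MvPolynomial (Fin 3) ℂ) :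
    pderiv i (sub M f) = C (M 0 i) * sub M (pderiv 0 f) + C (M 1 i) * sub M (pderiv 1 f)
      + C (M 2 i) * sub M (pderiv 2 f) := by
  induction f using MvPolynomial.induction_on with
  | C a => simp [sub_C]
  | add p q hp hq => simp only [map_add, hp, hq]; ring
  | mul_X p j hp =>
    simp only [map_mul, Derivation.leibniz, hp, sub_X, smul_eq_mul, map_add, pderiv_C, pderiv_X]
    fin_cases i <;> fin_cases j <;> simp [sub_X] <;> ring

lemma hessianDet_sub (M : Matrix (Fin 3) (Fin 3) ℂ) (f : MvPolynomial (Fin 3) ℂ) :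
    hessianDet (sub M f) = C (M.det ^ 2) * sub M (hessianDet f) := by
  have h : (Matrix.of fun i j : Fin 3 => pderiv i (pderiv j (sub M f)))
      = (M.map C).transpose * ((Matrix.of fun i j : Fin 3 => pderiv i (pderiv j f)).map (sub M))
        * (M.map C) := by
    refine Matrix.ext fun i j => ?_
    simp only [Matrix.of_apply, pderiv_sub, map_add, Derivation.leibniz, pderiv_C,
      smul_eq_mul, Matrix.mul_apply, Fin.sum_univ_three, Matrix.transpose_apply, Matrix.map_apply]
    ring
  have h2 : (M.map C).det = (C M.det : MvPolynomial (Fin 3) ℂ) := by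
    rw [RingHom.map_det]; rfl
  have h3 : ((Matrix.of fun i j : Fin 3 => pderiv i (pderiv j f)).map (sub M)).det
      = sub M (hessianDet f) := by
    rw [hessianDet, AlgHom.map_det]; rfl
  rw [hessianDet, h, Matrix.det_mul, Matrix.det_mul, Matrix.det_transpose, h2, h3, C_pow]
  ring

def Q (f : MvPolynomial (Fin 3) ℂ) : Prop :=
  ∀ i j : Fin 3, pderiv i (hessianDet f) * pderiv j f = pderiv j (hessianDet f) * pderiv i f

lemma Q_iff (f : MvPolynomial (Fin 3) ℂ) : Q f ↔ ∀ u : Fin 3 → ℂ,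
        Matrix.det
          !![pderiv 0 (hessianDet f), pderiv 1 (hessianDet f), pderiv 2 (hessianDet f);
             pderiv 0 f, pderiv 1 f, pderiv 2 f;
             C (u 0), C (u 1), C (u 2)] = 0 := by
  constructor
  · intro h u
    have h01 := h 0 1
    have h02 := h 0 2
    have h12 := h 1 2
    simp only [Matrix.det_fin_three, Matrix.of_apply, Matrix.cons_val]
    linear_combination C (u 2) * h01 - C (u 1) * h02 + C (u 0) * h12
  · intro h
    have h0 := h ![1, 0, 0]
    have h1 := h ![0, 1, 0]
    have h2 := h ![0, 0, 1]
    simp only [Matrix.det_fin_three, Matrix.of_apply, Matrix.cons_val, C_0, C_1] at h0 h1 h2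
    intro i j
    fin_cases i <;> fin_cases j <;> simp only [Fin.mk_zero, Fin.zero_eta, Fin.mk_one, Fin.reduceFinMk]
    · linear_combination h2
    · linear_combination -h1
    · linear_combination -h2
    · linear_combination h0
    · linear_combination h1
    · linear_combination -h0

lemma Q_sub (M) (f : MvPolynomial (Fin 3) ℂ) (h : Q f) : Q (sub M f) := by
  have h' : ∀ i j, sub M (pderiv i (hessianDet f)) * sub M (pderiv j f)
      = sub M (pderiv j (hessianDet f)) * sub M (pderiv i f) := fun i j => by
    rw [← map_mul, ← map_mul, h i j]
  have h01 := h' 0 1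
  have h02 := h' 0 2
  have h12 := h' 1 2
  intro i j
  simp only [hessianDet_sub, pderiv_sub, Derivation.leibniz, pderiv_C, smul_eq_mul]
  linear_combination C (M.det ^ 2) * ((C (M 0 i) * C (M 1 j) - C (M 1 i) * C (M 0 j)) * h01
    + (C (M 0 i) * C (M 2 j) - C (M 2 i) * C (M 0 j)) * h02
    + (C (M 1 i) * C (M 2 j) - C (M 2 i) * C (M 1 j)) * h12)

lemma sub_sub (M N : Matrix (Fin 3) (Fin 3) ℂ) (f : MvPolynomial (Fin 3) ℂ) :
    sub N (sub M f) = sub (M * N) f := by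
  have : (sub N).comp (sub M) = sub (M * N) := by
    apply MvPolynomial.algHom_ext
    intro i
    simp only [AlgHom.comp_apply, sub_X, map_add, map_mul, sub_C, Matrix.mul_apply,
      Fin.sum_univ_three]
    ring
  exact DFunLike.congr_fun this f

lemma sub_one (f : MvPolynomial (Fin 3) ℂ) : sub 1 f = f := by
  have : sub 1 = AlgHom.id ℂ _ := by
    apply MvPolynomial.algHom_ext
    intro i
    fin_cases i <;> simp [sub_X]
  exact DFunLike.congr_fun this f

lemma sub_hom (M) (f : MvPolynomial (Fin 3) ℂ) (n : ℕ) (h : f.IsHomogeneous n) :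
    (sub M f).IsHomogeneous n := by
  have := h.aeval (n := 1)
    (fun j => (C (M j 0) * X 0 + C (M j 1) * X 1 + C (M j 2) * X 2 : MvPolynomial (Fin 3) ℂ))
    (fun j => ((((isHomogeneous_C _ _).mul (isHomogeneous_X _ _)).add
      ((isHomogeneous_C _ _).mul (isHomogeneous_X _ _))).add
      ((isHomogeneous_C _ _).mul (isHomogeneous_X _ _))))
  simpa [sub] using this

lemma CR_sub (M) (f : MvPolynomial (Fin 3) ℂ) (h : CompletelyReducible f) :
    CompletelyReducible (sub M f) := by
  obtain ⟨a, b, c, ha, hb, hc, rfl⟩ := h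
  exact ⟨sub M a, sub M b, sub M c, sub_hom _ _ _ ha, sub_hom _ _ _ hb, sub_hom _ _ _ hc, by simp⟩

lemma CR_of_sub (M : Matrix (Fin 3) (Fin 3) ℂ) (hM : IsUnit M.det) (f : MvPolynomial (Fin 3) ℂ)
    (h : CompletelyReducible (sub M f)) : CompletelyReducible f := by
  have := CR_sub M⁻¹ _ h
  rwa [sub_sub, Matrix.mul_nonsing_inv _ hM, sub_one] at this

noncomputable def lin (a b c : ℂ) : MvPolynomial (Fin 3) ℂ := C a * X 0 + C b * X 1 + C c * X 2

lemma lin_hom (a b c : ℂ) : IsLinearForm (lin a b c) := 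
    ((((isHomogeneous_C _ _).mul (isHomogeneous_X _ _)).add
      ((isHomogeneous_C _ _).mul (isHomogeneous_X _ _))).add
      ((isHomogeneous_C _ _).mul (isHomogeneous_X _ _)))

lemma mono_eq (d : Fin 3 →₀ ℕ) (c : ℂ) :
    monomial d c = C c * (X 0 ^ d 0 * X 1 ^ d 1 * X 2 ^ d 2) := by
  rw [monomial_eq, Finsupp.prod_fintype _ _ (by simp), Fin.prod_univ_three]

lemma supp_deg {f : MvPolynomial (Fin 3) ℂ} {n : ℕ} (hf : f.IsHomogeneous n) {d}
    (hd : d ∈ f.support) : d 0 + d 1 + d 2 = n := by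
  have := hf (mem_support_iff.1 hd)
  rw [← this, Finsupp.weight_apply, Finsupp.sum_fintype _ _ (by simp)]
  simp [Fin.sum_univ_three]

lemma exists_lin (f : MvPolynomial (Fin 3) ℂ) (hf : f.IsHomogeneous 1) :
    ∃ a b c, f = lin a b c := by
  rw [f.as_sum]
  refine Finset.sum_induction _ (fun f => ∃ a b c, f = lin a b c) ?_ ?_ ?_
  · rintro _ _ ⟨a, b, c, rfl⟩ ⟨a', b', c', rfl⟩
    exact ⟨a + a', b + b', c + c', by simp only [lin, C_add]; ring⟩
  · exact ⟨0, 0, 0, by simp [lin]⟩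
  · intro d hd
    have h := supp_deg hf hd
    rw [mono_eq]
    generalize coeff d f = c
    obtain ⟨h0, h1, h2⟩ | ⟨h0, h1, h2⟩ | ⟨h0, h1, h2⟩ : (d 0 = 1 ∧ d 1 = 0 ∧ d 2 = 0) ∨
      (d 0 = 0 ∧ d 1 = 1 ∧ d 2 = 0) ∨ (d 0 = 0 ∧ d 1 = 0 ∧ d 2 = 1) := by omega
    · exact ⟨c, 0, 0, by simp [lin, h0, h1, h2]⟩
    · exact ⟨0, c, 0, by simp [lin, h0, h1, h2]⟩
    · exact ⟨0, 0, c, by simp [lin, h0, h1, h2]⟩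

/-- general cubic: coefficients of xxx xxy xxz xyy xyz xzz yyy yyz yzz zzz -/
noncomputable def cub (a b c d e k l m n o : ℂ) : MvPolynomial (Fin 3) ℂ :=
  C a * X 0 ^ 3 + C b * X 0 ^ 2 * X 1 + C c * X 0 ^ 2 * X 2 + C d * X 0 * X 1 ^ 2
   + C e * X 0 * X 1 * X 2 + C k * X 0 * X 2 ^ 2 + C l * X 1 ^ 3 + C m * X 1 ^ 2 * X 2
   + C n * X 1 * X 2 ^ 2 + C o * X 2 ^ 3

lemma exists_cub (f : MvPolynomial (Fin 3) ℂ) (hf : f.IsHomogeneous 3) :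
    ∃ a b c d e k l m n o, f = cub a b c d e k l m n o := by
  rw [f.as_sum]
  refine Finset.sum_induction _ (fun f => ∃ a b c d e k l m n o, f = cub a b c d e k l m n o)
    ?_ ?_ ?_
  · rintro _ _ ⟨a, b, c, d, e, k, l, m, n, o, rfl⟩ ⟨a', b', c', d', e', k', l', m', n', o', rfl⟩
    exact ⟨a + a', b + b', c + c', d + d', e + e', k + k', l + l', m + m', n + n', o + o',
      by simp only [cub, C_add]; ring⟩
  · exact ⟨0, 0, 0, 0, 0, 0, 0, 0, 0, 0, by simp [cub]⟩
  · intro d hd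
    have h := supp_deg hf hd
    rw [mono_eq]
    generalize coeff d f = c
    generalize d 0 = p at *
    generalize d 1 = q at *
    generalize d 2 = r at *
    have hp : p ≤ 3 := by omega
    have hq : q ≤ 3 := by omega
    obtain rfl : r = 3 - p - q := by omega
    interval_cases p <;> interval_cases q <;> first | omega | skip
    · exact ⟨0, 0, 0, 0, 0, 0, 0, 0, 0, c, by simp [cub]⟩
    · exact ⟨0, 0, 0, 0, 0, 0, 0, 0, c, 0, by simp [cub]; ring⟩
    · exact ⟨0, 0, 0, 0, 0, 0, 0, c, 0, 0, by simp [cub]; ring⟩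
    · exact ⟨0, 0, 0, 0, 0, 0, c, 0, 0, 0, by simp [cub]⟩
    · exact ⟨0, 0, 0, 0, 0, c, 0, 0, 0, 0, by simp [cub]; ring⟩
    · exact ⟨0, 0, 0, 0, c, 0, 0, 0, 0, 0, by simp [cub]; ring⟩
    · exact ⟨0, 0, 0, c, 0, 0, 0, 0, 0, 0, by simp [cub]; ring⟩
    · exact ⟨0, 0, c, 0, 0, 0, 0, 0, 0, 0, by simp [cub]; ring⟩
    · exact ⟨0, c, 0, 0, 0, 0, 0, 0, 0, 0, by simp [cub]; ring⟩
    · exact ⟨c, 0, 0, 0, 0, 0, 0, 0, 0, 0, by simp [cub]⟩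

lemma Q_xyz : Q (X 0 * X 1 * X 2) := by
  have h : hessianDet (X 0 * X 1 * X 2) = C 2 * (X 0 * X 1 * X 2) := by
    simp [hessianDet, Matrix.det_fin_three, pderiv_X, Pi.single_apply]
    rw [show (C 2 : MvPolynomial (Fin 3) ℂ) = 2 from map_ofNat C 2]
    ring
  intro i j
  rw [h]
  simp only [pderiv_C_mul, smul_eq_C_mul]
  ring

lemma forward (f : MvPolynomial (Fin 3) ℂ) (h : CompletelyReducible f) : Q f := by
  obtain ⟨a, b, c, ha, hb, hc, rfl⟩ := h
  obtain ⟨a0, a1, a2, rfl⟩ := exists_lin a ha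
  obtain ⟨b0, b1, b2, rfl⟩ := exists_lin b hb
  obtain ⟨c0, c1, c2, rfl⟩ := exists_lin c hc
  have := Q_sub !![a0, a1, a2; b0, b1, b2; c0, c1, c2] _ Q_xyz
  simpa [sub_X, lin] using this

lemma eval_sub (M : Matrix (Fin 3) (Fin 3) ℂ) (f : MvPolynomial (Fin 3) ℂ) (v : Fin 3 → ℂ) :
    eval v (sub M f) = eval (M.mulVec v) f := by
  induction f using MvPolynomial.induction_on with
  | C a => simp [sub_C]
  | add p q hp hq => simp only [map_add, hp, hq]
  | mul_X p j hp =>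
    simp only [map_mul, hp, sub_X, eval_X, map_add, eval_C, Matrix.mulVec, dotProduct,
      Fin.sum_univ_three]

lemma exists_quad_root (a b c : ℂ) (ha : a ≠ 0) :
    ∃ s t : ℂ, b = -a * (s + t) ∧ c = a * (s * t) := by
  obtain ⟨r, hr⟩ := IsAlgClosed.exists_pow_nat_eq (b ^ 2 - 4 * a * c) (n := 2) (by norm_num)
  refine ⟨(-b + r) / (2 * a), (-b - r) / (2 * a), ?_, ?_⟩
  · field_simp; ring
  · field_simp; linear_combination hr

lemma exists_cubic_root (a b c d : ℂ) (ha : a ≠ 0) :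
    ∃ t : ℂ, a * t ^ 3 + b * t ^ 2 + c * t + d = 0 := by
  obtain ⟨t, ht⟩ := IsAlgClosed.exists_root (Cubic.toPoly ⟨a, b, c, d⟩)
    (by rw [Cubic.degree_of_a_ne_zero (by exact ha)]; norm_num)
  exact ⟨t, by simpa [Cubic.toPoly, Polynomial.IsRoot] using ht⟩

/-- Binary quadratic forms split. -/
lemma quad_split (a b c : ℂ) : ∃ p q r s : ℂ, a = p * r ∧ b = p * s + q * r ∧ c = q * s := by
  by_cases ha : a = 0
  · exact ⟨0, 1, b, c, by simp [ha], by simp, by simp⟩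
  · obtain ⟨s, t, hb, hc⟩ := exists_quad_root a b c ha
    exact ⟨a, -a * s, 1, -t, by simp, by rw [hb]; ring, by rw [hc]; ring⟩

lemma CR_binary (l m n o : ℂ) : CompletelyReducible (cub 0 0 0 0 0 0 l m n o) := by
  by_cases hl : l = 0
  · obtain ⟨p, q, r, s, h1, h2, h3⟩ := quad_split m n o
    refine ⟨lin 0 0 1, lin 0 p q, lin 0 r s, lin_hom _ _ _, lin_hom _ _ _, lin_hom _ _ _, ?_⟩
    subst h1 h2 h3 hl
    simp [cub, lin]; ring
  · obtain ⟨t, ht⟩ := exists_cubic_root l m n o hl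
    obtain ⟨p, q, r, s, h1, h2, h3⟩ := quad_split l (m + l * t) (n + (m + l * t) * t)
    refine ⟨lin 0 1 (-t), lin 0 p q, lin 0 r s, lin_hom _ _ _, lin_hom _ _ _, lin_hom _ _ _, ?_⟩
    obtain rfl : m = p * s + q * r - l * t := by linear_combination h2
    obtain rfl : n = q * s - (p * s + q * r) * t := by linear_combination h3
    obtain rfl : o = - (q * s * t) := by linear_combination ht
    subst h1
    simp [cub, lin]; ring

lemma pd2 (i : Fin 3) : pderiv i (2 : MvPolynomial (Fin 3) ℂ) = 0 := by
  rw [show (2 : MvPolynomial (Fin 3) ℂ) = C 2 from (map_ofNat C 2).symm, pderiv_C]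

lemma pd3 (i : Fin 3) : pderiv i (3 : MvPolynomial (Fin 3) ℂ) = 0 := by
  rw [show (3 : MvPolynomial (Fin 3) ℂ) = C 3 from (map_ofNat C 3).symm, pderiv_C]

/-- Normal form at a smooth point. -/
lemma CR_normal (b g0 g1 g2 g3 : ℂ) (h : Q (cub 0 1 0 0 0 b g0 g1 g2 g3)) :
    CompletelyReducible (cub 0 1 0 0 0 b g0 g1 g2 g3) := by
  have key : ∀ i j : Fin 3, ∀ v : Fin 3 → ℂ, _ := fun i j v => congrArg (eval v) (h i j)
  have hb : b = 0 := by
    have := key 0 1 ![1, 0, 0]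
    simp [cub, hessianDet, Matrix.det_fin_three, pd2, pd3, pderiv_X, Pi.single_apply] at this
    linear_combination (-1/24) * this
  subst hb
  have h3 : g3 = 0 := by
    have e1 := key 0 2 ![1, 1, 0]
    have e2 := key 0 2 ![2, 1, 0]
    simp [cub, hessianDet, Matrix.det_fin_three, pd2, pd3, pderiv_X, Pi.single_apply] at e1 e2
    linear_combination (1/288) * e2 - (2/288) * e1
  subst h3
  have h4 : 4 * g0 * g2 = g1 ^ 2 := by
    have e1 := key 0 1 ![1, 1, 0]
    simp [cub, hessianDet, Matrix.det_fin_three, pd2, pd3, pderiv_X, Pi.single_apply] at e1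
    linear_combination (-1/48) * e1
  obtain ⟨s, hs⟩ := IsAlgClosed.exists_pow_nat_eq g0 (n := 2) (by norm_num)
  obtain ⟨t, ht, ht'⟩ : ∃ t, t ^ 2 = g2 ∧ g1 = 2 * s * t := by
    obtain ⟨t, ht⟩ := IsAlgClosed.exists_pow_nat_eq g2 (n := 2) (by norm_num)
    have : (g1 - 2 * s * t) * (g1 + 2 * s * t) = 0 := by
      subst hs ht; linear_combination -h4
    rcases mul_eq_zero.1 this with h | h
    · exact ⟨t, ht, by linear_combination h⟩
    · exact ⟨-t, by rw [← ht]; ring, by linear_combination h⟩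
  subst hs ht ht'
  refine ⟨lin 0 1 0, lin 1 (Complex.I * s) (Complex.I * t), lin 1 (-(Complex.I * s))
    (-(Complex.I * t)), lin_hom _ _ _, lin_hom _ _ _, lin_hom _ _ _, ?_⟩
  have hI : (C Complex.I * C Complex.I : MvPolynomial (Fin 3) ℂ) = -1 := by
    rw [← C_mul, Complex.I_mul_I]; simp
  have h2 : (C 2 : MvPolynomial (Fin 3) ℂ) = 2 := map_ofNat C 2
  simp only [cub, lin, C_0, C_1, C_mul, C_neg, C_pow, h2]
  linear_combination (X 1 * (C s * X 1 + C t * X 2) ^ 2) * hI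

lemma CR_smooth (d e k l m n o : ℂ) (h : Q (cub 0 1 0 (2 * d) (2 * e) k l m n o)) :
    CompletelyReducible (cub 0 1 0 (2 * d) (2 * e) k l m n o) := by
  have h2 : (C 2 : MvPolynomial (Fin 3) ℂ) = 2 := map_ofNat C 2
  have hs : sub !![1, -d, -e; 0, 1, 0; 0, 0, 1] (cub 0 1 0 (2 * d) (2 * e) k l m n o)
      = cub 0 1 0 0 0 k (l - d ^ 2) (m - 2 * d * e) (n - e ^ 2 - k * d) (o - k * e) := by
    have h2' : sub !![1, -d, -e; 0, 1, 0; 0, 0, 1] 2 = 2 := map_ofNat _ 2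
    simp [cub, sub_X, sub_C, h2, h2']
    ring
  apply CR_of_sub !![1, -d, -e; 0, 1, 0; 0, 0, 1]
  · simp [Matrix.det_fin_three]
  · have := Q_sub !![1, -d, -e; 0, 1, 0; 0, 0, 1] _ h
    rw [hs] at this ⊢
    exact CR_normal _ _ _ _ _ this

lemma exists_dual (p : Fin 3 → ℂ) (hp : p ≠ 0) :
    ∃ w : Fin 3 → ℂ, p 0 * w 0 + p 1 * w 1 + p 2 * w 2 = 1 := by
  obtain ⟨i, hi⟩ := Function.ne_iff.1 hp
  refine ⟨Pi.single i (p i)⁻¹, ?_⟩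
  have : p i ≠ 0 := hi
  fin_cases i <;> simp_all [Pi.single_apply]

lemma frame (p n : Fin 3 → ℂ) (hp : p ≠ 0) (hn : n ≠ 0)
    (hnp : p 0 * n 0 + p 1 * n 1 + p 2 * n 2 = 0) :
    ∃ M : Matrix (Fin 3) (Fin 3) ℂ, IsUnit M.det ∧ M.mulVec ![1, 0, 0] = p ∧
      M 0 0 * n 0 + M 1 0 * n 1 + M 2 0 * n 2 = 0 ∧
      M 0 1 * n 0 + M 1 1 * n 1 + M 2 1 * n 2 = 1 ∧
      M 0 2 * n 0 + M 1 2 * n 1 + M 2 2 * n 2 = 0 := by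
  obtain ⟨w, hw⟩ := exists_dual p hp
  obtain ⟨m, hm⟩ := exists_dual n hn
  refine ⟨!![p 0, m 0, n 1 * w 2 - n 2 * w 1; p 1, m 1, n 2 * w 0 - n 0 * w 2;
    p 2, m 2, n 0 * w 1 - n 1 * w 0], ?_, ?_, ?_, ?_, ?_⟩
  · rw [isUnit_iff_ne_zero]
    have : Matrix.det !![p 0, m 0, n 1 * w 2 - n 2 * w 1; p 1, m 1, n 2 * w 0 - n 0 * w 2;
      p 2, m 2, n 0 * w 1 - n 1 * w 0] = -1 := by
      simp only [Matrix.det_fin_three, Matrix.of_apply, Matrix.cons_val]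
      linear_combination (-(n 0 * m 0 + n 1 * m 1 + n 2 * m 2)) * hw - hm
        + (m 0 * w 0 + m 1 * w 1 + m 2 * w 2) * hnp
    rw [this]; norm_num
  · ext i
    fin_cases i <;> simp [Matrix.mulVec, dotProduct, Fin.sum_univ_three]
  · simp; linear_combination hnp
  · simp; linear_combination hm
  · simp; ring

lemma eval_pderiv_sub (M : Matrix (Fin 3) (Fin 3) ℂ) (i : Fin 3) (f : MvPolynomial (Fin 3) ℂ)
    (v : Fin 3 → ℂ) : eval v (pderiv i (sub M f)) =
      M 0 i * eval (M.mulVec v) (pderiv 0 f) + M 1 i * eval (M.mulVec v) (pderiv 1 f)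
      + M 2 i * eval (M.mulVec v) (pderiv 2 f) := by
  rw [pderiv_sub]
  simp only [map_add, map_mul, eval_C, eval_sub]

lemma euler (f : MvPolynomial (Fin 3) ℂ) (hf : f.IsHomogeneous 3) (p : Fin 3 → ℂ) :
    p 0 * eval p (pderiv 0 f) + p 1 * eval p (pderiv 1 f) + p 2 * eval p (pderiv 2 f)
      = 3 * eval p f := by
  obtain ⟨a, b, c, d, e, k, l, m, n, o, rfl⟩ := exists_cub f hf
  simp [cub, pderiv_X, Pi.single_apply]
  ring

lemma backward_smooth (f : MvPolynomial (Fin 3) ℂ) (hf : f.IsHomogeneous 3) (hQ : Q f)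
    (p : Fin 3 → ℂ) (hp : eval p f = 0) (i : Fin 3) (hi : eval p (pderiv i f) ≠ 0) :
    CompletelyReducible f := by
  have hE := euler f hf p
  rw [hp, mul_zero] at hE
  have hp0 : p ≠ 0 := by
    rintro rfl
    obtain ⟨a, b, c, d, e, k, l, m, n, o, rfl⟩ := exists_cub f hf
    apply hi
    simp [cub, pderiv_X]
  obtain ⟨M, hM, hMp, h0, h1, h2⟩ := frame p (fun j => eval p (pderiv j f)) hp0
    (fun h => hi (congrFun h i)) hE
  apply CR_of_sub M hM
  have hQ' := Q_sub M f hQ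
  have e := eval_sub M f ![1, 0, 0]
  have e0 := eval_pderiv_sub M 1 f ![1, 0, 0]
  have e1 := eval_pderiv_sub M 2 f ![1, 0, 0]
  rw [hMp] at e e0 e1
  rw [hp] at e
  rw [h1] at e0
  rw [h2] at e1
  obtain ⟨a, b, c, d, e', k, l, m, n, o, hg⟩ := exists_cub _ (sub_hom M f 3 hf)
  rw [hg] at hQ' e e0 e1 ⊢
  simp [cub, pderiv_X, Pi.single_apply] at e e0 e1
  subst e e0 e1
  have := CR_smooth (d / 2) (e' / 2) k l m n o
  rw [mul_div_cancel₀ d two_ne_zero, mul_div_cancel₀ e' two_ne_zero] at this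
  exact this hQ'

lemma exists_zero (f : MvPolynomial (Fin 3) ℂ) (hf : f.IsHomogeneous 3) :
    ∃ p : Fin 3 → ℂ, p ≠ 0 ∧ eval p f = 0 := by
  obtain ⟨a, b, c, d, e, k, l, m, n, o, rfl⟩ := exists_cub f hf
  by_cases ha : a = 0
  · exact ⟨![1, 0, 0], fun h => by simpa using congrFun h 0, by simp [cub, ha]⟩
  · obtain ⟨t, ht⟩ := exists_cubic_root a b d l ha
    refine ⟨![t, 1, 0], fun h => by simpa using congrFun h 1, ?_⟩
    simp [cub]
    linear_combination ht

lemma exists_perp (p : Fin 3 → ℂ) (hp : p ≠ 0) :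
    ∃ n : Fin 3 → ℂ, n ≠ 0 ∧ p 0 * n 0 + p 1 * n 1 + p 2 * n 2 = 0 := by
  by_cases h : p 0 = 0
  · exact ⟨![1, 0, 0], fun h => by simpa using congrFun h 0, by simp [h]⟩
  · exact ⟨![p 1, -p 0, 0], fun h' => h (by simpa using congrFun h' 1), by simp; ring⟩

lemma backward (f : MvPolynomial (Fin 3) ℂ) (hf : f.IsHomogeneous 3) (hQ : Q f) :
    CompletelyReducible f := by
  by_cases H : ∃ p, eval p f = 0 ∧ ∃ i, eval p (pderiv i f) ≠ 0
  · obtain ⟨p, hp, i, hi⟩ := H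
    exact backward_smooth f hf hQ p hp i hi
  · push Not at H
    obtain ⟨p, hp0, hp⟩ := exists_zero f hf
    obtain ⟨n, hn, hnp⟩ := exists_perp p hp0
    obtain ⟨M, hM, hMp, -, -, -⟩ := frame p n hp0 hn hnp
    apply CR_of_sub M hM
    have H' : ∀ q, eval q (sub M f) = 0 → ∀ i, eval q (pderiv i (sub M f)) = 0 := by
      intro q hq i
      rw [eval_sub] at hq
      rw [eval_pderiv_sub, H _ hq, H _ hq, H _ hq]
      simp
    have h0 : eval ![1, 0, 0] (sub M f) = 0 := by rw [eval_sub, hMp, hp]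
    have h1 := H' _ h0 1
    have h2 := H' _ h0 2
    obtain ⟨a, b, c, d, e, k, l, m, n, o, hg⟩ := exists_cub _ (sub_hom M f 3 hf)
    rw [hg] at H' h0 h1 h2 ⊢
    simp [cub, pderiv_X, Pi.single_apply] at h0 h1 h2
    subst h0 h1 h2
    have key : ∀ y z : ℂ, d * y ^ 2 + e * y * z + k * z ^ 2 = 0 := by
      intro y z
      by_contra hne
      have hx : ∃ x, x * (d * y ^ 2 + e * y * z + k * z ^ 2)
          + (l * y ^ 3 + m * y ^ 2 * z + n * y * z ^ 2 + o * z ^ 3) = 0 :=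
        ⟨-(l * y ^ 3 + m * y ^ 2 * z + n * y * z ^ 2 + o * z ^ 3) /
          (d * y ^ 2 + e * y * z + k * z ^ 2), by rw [div_mul_cancel₀ _ hne]; ring⟩
      obtain ⟨x, hx⟩ := hx
      have := H' ![x, y, z] (by simp [cub]; linear_combination hx) 0
      simp [cub, pderiv_X, Pi.single_apply] at this
      apply hne
      linear_combination this
    have k1 := key 1 0
    have k2 := key 0 1
    have k3 := key 1 1
    obtain rfl : d = 0 := by linear_combination k1
    obtain rfl : k = 0 := by linear_combination k2
    obtain rfl : e = 0 := by linear_combination k3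
    exact CR_binary l m n o

end CubicAux

theorem stmt1 (f : MvPolynomial (Fin 3) ℂ) (hf : f.IsHomogeneous 3) :
    CompletelyReducible f ↔
      ∀ u : Fin 3 → ℂ,
        Matrix.det
          !![pderiv 0 (hessianDet f), pderiv 1 (hessianDet f), pderiv 2 (hessianDet f);
             pderiv 0 f, pderiv 1 f, pderiv 2 f;
             C (u 0), C (u 1), C (u 2)] = 0 := by
  rw [← CubicAux.Q_iff]
  exact ⟨CubicAux.forward f, CubicAux.backward f hf⟩
end

section
/- For a ternary cubic form f over ℂ, the following are equivalent: (1) the Hessian determinant det(∂ᵢ∂ⱼ f) is the zero polynomial; (2) either f = a₀·a³ + b₀·b³ for some a₀, b₀ ∈ ℂ and linear forms a, b, or f = a²·b for some linear forms a, b; (3) f = a·b·c for some linear forms a, b, c whose coefficient vectors are linearly dependent over ℂ. -/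
open MvPolynomial

/-- The trilinear form with coefficients `c`. -/
noncomputable def triF (c : Fin 3 → Fin 3 → Fin 3 → ℂ) (x y z : Fin 3 → ℂ) : ℂ :=
  ∑ i, ∑ j, ∑ k, c i j k * x k * y i * z j

/-- The matrix of the trilinear form at `x`. -/
noncomputable def matF (c : Fin 3 → Fin 3 → Fin 3 → ℂ) (x : Fin 3 → ℂ) :
    Matrix (Fin 3) (Fin 3) ℂ := Matrix.of fun i j => ∑ k, c i j k * x k

theorem triF_lin (c : Fin 3 → Fin 3 → Fin 3 → ℂ) (p q r : ℂ) (x y z u w : Fin 3 → ℂ) :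
    triF c (p • x + q • y + r • z) u w = p * triF c x u w + q * triF c y u w + r * triF c z u w := by
  simp only [triF, Finset.mul_sum, ← Finset.sum_add_distrib]
  refine Finset.sum_congr rfl fun i _ => Finset.sum_congr rfl fun j _ =>
    Finset.sum_congr rfl fun k _ => ?_
  simp only [Pi.add_apply, Pi.smul_apply, smul_eq_mul]
  ring

theorem triF_eq_mat (c : Fin 3 → Fin 3 → Fin 3 → ℂ) (x y z : Fin 3 → ℂ) :
    triF c x y z = ∑ i, ∑ j, matF c x i j * y i * z j := by
  simp only [triF, matF, Matrix.of_apply, Finset.sum_mul]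

theorem triF_swap23 (c : Fin 3 → Fin 3 → Fin 3 → ℂ) (h1 : ∀ i j k, c i j k = c j i k)
    (x y z : Fin 3 → ℂ) : triF c x y z = triF c x z y := by
  unfold triF
  rw [Finset.sum_comm]
  refine Finset.sum_congr rfl fun i _ => Finset.sum_congr rfl fun j _ =>
    Finset.sum_congr rfl fun k _ => ?_
  rw [h1 j i k]; ring

theorem triF_swap13 (c : Fin 3 → Fin 3 → Fin 3 → ℂ) (h2 : ∀ i j k, c i j k = c i k j)
    (x y z : Fin 3 → ℂ) : triF c x y z = triF c z y x := by
  unfold triF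
  refine Finset.sum_congr rfl fun i _ => ?_
  rw [Finset.sum_comm]
  refine Finset.sum_congr rfl fun j _ =>
    Finset.sum_congr rfl fun k _ => ?_
  rw [h2 i k j]; ring

theorem triF_add (c : Fin 3 → Fin 3 → Fin 3 → ℂ) (x y u w : Fin 3 → ℂ) :
    triF c (x + y) u w = triF c x u w + triF c y u w := by
  have := triF_lin c 1 1 0 x y 0 u w
  simpa using this

theorem matF_symm (c : Fin 3 → Fin 3 → Fin 3 → ℂ) (h1 : ∀ i j k, c i j k = c j i k)
    (x : Fin 3 → ℂ) (i j : Fin 3) : matF c x i j = matF c x j i := by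
  simp only [matF, Matrix.of_apply]
  exact Finset.sum_congr rfl fun k _ => by rw [h1]

theorem matF_add (c : Fin 3 → Fin 3 → Fin 3 → ℂ) (x y : Fin 3 → ℂ) :
    matF c (x + y) = matF c x + matF c y := by
  ext i j
  simp [matF, mul_add, Finset.sum_add_distrib]

theorem matF_sub (c : Fin 3 → Fin 3 → Fin 3 → ℂ) (x y : Fin 3 → ℂ) :
    matF c (x - y) = matF c x - matF c y := by
  ext i j
  simp [matF, mul_sub, Finset.sum_sub_distrib]

/-- First-order expansion of vanishing determinants, rank two case. -/
theorem rank_two_step (A B : Matrix (Fin 3) (Fin 3) ℂ) (hA : ∀ i j, A i j = A j i)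
    (hB : ∀ i j, B i j = B j i)
    (dA : A.det = 0) (dB : B.det = 0) (dp : (A + B).det = 0) (dm : (A - B).det = 0) (l : Fin 3) :
    ∑ i, ∑ j, B i j * A.adjugate i l * A.adjugate j l = 0 := by
  have a1 := hA 1 0
  have a2 := hA 2 0
  have a3 := hA 2 1
  have b1 := hB 1 0
  have b2 := hB 2 0
  have b3 := hB 2 1
  have key : ∑ i, ∑ j, B i j * A.adjugate i j = 0 := by
    simp only [Matrix.det_fin_three, Matrix.add_apply, Matrix.sub_apply] at *
    simp only [Fin.sum_univ_three, Matrix.adjugate_fin_three, Matrix.of_apply, Matrix.cons_val', Matrix.cons_val_zero,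
      Matrix.cons_val_one, Matrix.cons_val]
    rw [a1, a2, a3, b1, b2, b3] at *
    linear_combination (1/2) * dp - (1/2) * dm - dB
  have hm : ∀ i j, A.adjugate i l * A.adjugate j l = A.adjugate l l * A.adjugate i j := by
    rw [Matrix.det_fin_three] at dA
    rw [a1, a2, a3] at dA
    intro i j
    fin_cases i <;> fin_cases j <;> fin_cases l <;>
    simp [Matrix.adjugate_fin_three] <;> (try simp only [a1, a2, a3]) <;>
    first
    | ring1
    | exact Or.inl (by ring1)
    | linear_combination (A 0 0) * dA
    | linear_combination (-A 0 0) * dA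
    | linear_combination (A 1 1) * dA
    | linear_combination (-A 1 1) * dA
    | linear_combination (A 2 2) * dA
    | linear_combination (-A 2 2) * dA
    | linear_combination (A 0 1) * dA
    | linear_combination (-A 0 1) * dA
    | linear_combination (A 0 2) * dA
    | linear_combination (-A 0 2) * dA
    | linear_combination (A 1 2) * dA
    | linear_combination (-A 1 2) * dA
  calc _ = A.adjugate l l * ∑ i, ∑ j, B i j * A.adjugate i j := by
        simp only [Finset.mul_sum]
        refine Finset.sum_congr rfl fun i _ => Finset.sum_congr rfl fun j _ => ?_
        linear_combination B i j * hm i j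
    _ = 0 := by rw [key, mul_zero]

/-- Bilinear identity for symmetric matrices of rank at most one. -/
theorem rank_one_id (A : Matrix (Fin 3) (Fin 3) ℂ) (hA : ∀ i j, A i j = A j i)
    (h0 : A.adjugate = 0) (a b w z : Fin 3 → ℂ) :
    (∑ i, ∑ j, A i j * a i * b j) * (∑ i, ∑ j, A i j * w i * z j) =
    (∑ i, ∑ j, A i j * a i * z j) * (∑ i, ∑ j, A i j * w i * b j) := by
  have a1 := hA 1 0
  have a2 := hA 2 0
  have a3 := hA 2 1
  have m : ∀ i j, A.adjugate i j = 0 := fun i j => by rw [h0]; rfl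
  have m00 := m 0 0
  have m01 := m 0 1
  have m02 := m 0 2
  have m11 := m 1 1
  have m12 := m 1 2
  have m22 := m 2 2
  simp only [Matrix.adjugate_fin_three, Matrix.of_apply, Matrix.cons_val', Matrix.cons_val_zero,
      Matrix.cons_val_one, Matrix.cons_val] at m00 m01 m02 m11 m12 m22
  simp only [Fin.sum_univ_three]
  rw [a1, a2, a3] at *
  linear_combination ((a 1 * w 2 - a 2 * w 1) * (b 1 * z 2 - b 2 * z 1)) * m00
    + ((a 2 * w 0 - a 0 * w 2) * (b 2 * z 0 - b 0 * z 2)) * m11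
    + ((a 0 * w 1 - a 1 * w 0) * (b 0 * z 1 - b 1 * z 0)) * m22
    + ((a 1 * w 2 - a 2 * w 1) * (b 2 * z 0 - b 0 * z 2) + (a 2 * w 0 - a 0 * w 2) * (b 1 * z 2 - b 2 * z 1)) * m01
    + ((a 1 * w 2 - a 2 * w 1) * (b 0 * z 1 - b 1 * z 0) + (a 0 * w 1 - a 1 * w 0) * (b 1 * z 2 - b 2 * z 1)) * m02
    + ((a 2 * w 0 - a 0 * w 2) * (b 0 * z 1 - b 1 * z 0) + (a 0 * w 1 - a 1 * w 0) * (b 2 * z 0 - b 0 * z 2)) * m12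

theorem exists_ker (l : (Fin 3 → ℂ) → ℂ) (hl : ∀ p q r x y z,
    l (p • x + q • y + r • z) = p * l x + q * l y + r * l z) : ∃ v : Fin 3 → ℂ, v ≠ 0 ∧ l v = 0 := by
  have h0 : l 0 = 0 := by simpa using hl 0 0 0 0 0 0
  by_cases h : l ![1, 0, 0] = 0
  · exact ⟨![1, 0, 0], fun e => by simpa using congrFun e 0, h⟩
  · refine ⟨(l ![0, 1, 0]) • ![1, 0, 0] + (-l ![1, 0, 0]) • ![0, 1, 0] + (0 : ℂ) • 0, fun e => ?_, ?_⟩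
    · have := congrFun e 1
      simp at this
      exact h this
    · rw [hl]; ring

/-- A cubic with vanishing Hessian has a vector `v` with `T(v, v, ·) = 0`. -/
theorem exists_sing (c : Fin 3 → Fin 3 → Fin 3 → ℂ) (h1 : ∀ i j k, c i j k = c j i k)
    (h2 : ∀ i j k, c i j k = c i k j) (hd : ∀ x, (matF c x).det = 0)
    (hne : ∃ w, triF c w w w ≠ 0) :
    ∃ v : Fin 3 → ℂ, v ≠ 0 ∧ ∀ y, triF c y v v = 0 := by
  by_cases hx : ∃ x, (matF c x).adjugate ≠ 0
  · obtain ⟨x, hx⟩ := hx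
    have : ∃ l, (fun i => (matF c x).adjugate i l) ≠ 0 := by
      by_contra! hcon
      exact hx (by ext i l; exact congrFun (hcon l) i)
    obtain ⟨l, hl⟩ := this
    refine ⟨_, hl, fun y => ?_⟩
    rw [triF_eq_mat]
    exact rank_two_step _ _ (matF_symm c h1 x) (matF_symm c h1 y) (hd x) (hd y)
      (by rw [← matF_add]; exact hd _) (by rw [← matF_sub]; exact hd _) l
  · push Not at hx
    have id1 : ∀ x a b w z, triF c x a b * triF c x w z = triF c x a z * triF c x w b := by
      intro x a b w z
      simp only [triF_eq_mat]
      exact rank_one_id _ (matF_symm c h1 x) (hx x) a b w z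
    have s23 := triF_swap23 c h1
    have s13 := triF_swap13 c h2
    obtain ⟨w, hw⟩ := hne
    obtain ⟨v, hv, hv0⟩ := exists_ker (fun x => triF c x w w) (fun p q r x y z => triF_lin c p q r x y z w w)
    refine ⟨v, hv, fun y => ?_⟩
    have hv1 : triF c w v w = 0 := by rw [s23, s13]; exact hv0
    have e1 : ∀ z, triF c w v z = 0 := fun z => by
      have := id1 w v z w w
      rw [hv1, zero_mul] at this
      exact (mul_eq_zero.mp this).resolve_right hw
    have e2 : triF c y v w = 0 := by rw [s13]; exact e1 y
    have e3 := id1 y v v w w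
    have e4 := id1 (w + y) v v w w
    simp only [triF_add, e1, e2, zero_mul, zero_add] at e3 e4
    have : triF c y v v * triF c w w w = 0 := by linear_combination e4 - e3
    exact (mul_eq_zero.mp this).resolve_right hw

theorem exists_frame (v : Fin 3 → ℂ) (hv : v ≠ 0) : ∃ e e' A B D : Fin 3 → ℂ,
    ∀ x : Fin 3 → ℂ, x = (∑ i, A i * x i) • e + (∑ i, B i * x i) • e' + (∑ i, D i * x i) • v := by
  have : v 0 ≠ 0 ∨ v 1 ≠ 0 ∨ v 2 ≠ 0 := by
    by_contra! hcon
    exact hv (by ext i; fin_cases i <;> simp [hcon])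
  rcases this with h | h | h
  · refine ⟨![0, 1, 0], ![0, 0, 1], ![-v 1 / v 0, 1, 0], ![-v 2 / v 0, 0, 1], ![1 / v 0, 0, 0], fun x => ?_⟩
    ext i
    fin_cases i <;> simp [Fin.sum_univ_three] <;> field_simp <;> ring
  · refine ⟨![1, 0, 0], ![0, 0, 1], ![1, -v 0 / v 1, 0], ![0, -v 2 / v 1, 1], ![0, 1 / v 1, 0], fun x => ?_⟩
    ext i
    fin_cases i <;> simp [Fin.sum_univ_three] <;> field_simp <;> ring
  · refine ⟨![1, 0, 0], ![0, 1, 0], ![1, 0, -v 0 / v 2], ![0, 1, -v 1 / v 2], ![0, 0, 1 / v 2], fun x => ?_⟩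
    ext i
    fin_cases i <;> simp [Fin.sum_univ_three] <;> field_simp <;> ring

/-- Gram determinants vanish. -/
theorem gram_det (c : Fin 3 → Fin 3 → Fin 3 → ℂ) (hd : ∀ x, (matF c x).det = 0)
    (P : Fin 3 → Fin 3 → ℂ) (x : Fin 3 → ℂ) :
    (Matrix.of fun i j => triF c x (P i) (P j)).det = 0 := by
  have : (Matrix.of fun i j => triF c x (P i) (P j)) =
      Matrix.of P * matF c x * (Matrix.of P).transpose := by
    ext i j
    simp only [triF_eq_mat, Matrix.mul_apply, Matrix.of_apply, Matrix.transpose_apply,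
      Finset.sum_mul]
    rw [Finset.sum_comm]
    refine Finset.sum_congr rfl fun i _ => Finset.sum_congr rfl fun j _ => ?_
    ring
  rw [this, Matrix.det_mul, Matrix.det_mul, hd]
  simp

theorem quad_root (g0 g1 g2 : ℂ) (h : g0 ≠ 0) : ∃ r : ℂ, g0 * r ^ 2 + g1 * r + g2 = 0 := by
  obtain ⟨r, hr⟩ := IsAlgClosed.exists_root
    (Polynomial.C g0 * Polynomial.X ^ 2 + Polynomial.C g1 * Polynomial.X + Polynomial.C g2)
    (by rw [Polynomial.degree_quadratic h]; decide)
  exact ⟨r, by simpa using hr⟩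

theorem cubic_root (g0 g1 g2 g3 : ℂ) (h : g0 ≠ 0) :
    ∃ r : ℂ, g0 * r ^ 3 + g1 * r ^ 2 + g2 * r + g3 = 0 := by
  obtain ⟨r, hr⟩ := IsAlgClosed.exists_root
    (Polynomial.C g0 * Polynomial.X ^ 3 + Polynomial.C g1 * Polynomial.X ^ 2
      + Polynomial.C g2 * Polynomial.X + Polynomial.C g3)
    (by rw [Polynomial.degree_cubic h]; decide)
  exact ⟨r, by simpa using hr⟩

theorem bin_quad (g0 g1 g2 : ℂ) : ∃ p q p' q' : ℂ, ∀ y z : ℂ,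
    g0 * y ^ 2 + g1 * y * z + g2 * z ^ 2 = (p * y + q * z) * (p' * y + q' * z) := by
  by_cases h : g0 = 0
  · exact ⟨0, 1, g1, g2, fun y z => by rw [h]; ring⟩
  · obtain ⟨r, hr⟩ := quad_root g0 g1 g2 h
    exact ⟨1, -r, g0, g1 + g0 * r, fun y z => by linear_combination z ^ 2 * hr⟩

theorem bin_cubic (g0 g1 g2 g3 : ℂ) : ∃ p q p' q' p'' q'' : ℂ, ∀ y z : ℂ,
    g0 * y ^ 3 + g1 * y ^ 2 * z + g2 * y * z ^ 2 + g3 * z ^ 3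
      = (p * y + q * z) * (p' * y + q' * z) * (p'' * y + q'' * z) := by
  by_cases h : g0 = 0
  · obtain ⟨p, q, p', q', hh⟩ := bin_quad g1 g2 g3
    exact ⟨0, 1, p, q, p', q', fun y z => by rw [h]; linear_combination z * hh y z⟩
  · obtain ⟨r, hr⟩ := cubic_root g0 g1 g2 g3 h
    obtain ⟨p, q, p', q', hh⟩ := bin_quad g0 (g1 + g0 * r) (g2 + g1 * r + g0 * r ^ 2)
    exact ⟨1, -r, p, q, p', q', fun y z => by
      linear_combination (y - r * z) * hh y z + z ^ 3 * hr⟩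

/-- The square case, assuming the first coefficient of `q` is nonzero. -/
theorem sq_case (g0 g1 g2 g3 q0 q1 q2 : ℂ) (h0 : q0 ≠ 0) (hD : q0 * q2 - q1 ^ 2 = 0)
    (hd : ∀ y z : ℂ, (q0 * y + q1 * z) ^ 2 * (g2 * y + g3 * z)
      - 2 * (q0 * y + q1 * z) * (q1 * y + q2 * z) * (g1 * y + g2 * z)
      + (q1 * y + q2 * z) ^ 2 * (g0 * y + g1 * z) = 0) :
    ∃ p q r t u : ℂ, ∀ y z s : ℂ,
      g0 * y ^ 3 + 3 * g1 * y ^ 2 * z + 3 * g2 * y * z ^ 2 + g3 * z ^ 3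
        + 3 * s * (q0 * y ^ 2 + 2 * q1 * y * z + q2 * z ^ 2)
      = (p * y + q * z) ^ 2 * (r * y + t * z + u * s) := by
  obtain ⟨k, rfl⟩ : ∃ k, q1 = k * q0 := ⟨q1 / q0, by field_simp⟩
  obtain rfl : q2 = k ^ 2 * q0 := by
    apply mul_left_cancel₀ h0
    linear_combination hD
  have e1 : ∀ y z : ℂ, (y + k * z) ^ 2 * ((g2 - 2 * k * g1 + k ^ 2 * g0) * y
      + (g3 - 2 * k * g2 + k ^ 2 * g1) * z) = 0 := fun y z => by
    apply mul_left_cancel₀ (pow_ne_zero 2 h0)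
    linear_combination hd y z
  have f1 : g2 - 2 * k * g1 + k ^ 2 * g0 = 0 := by linear_combination e1 1 0
  have f2 : g3 - 2 * k * g2 + k ^ 2 * g1 = 0 := by
    by_cases hk : k = 0
    · subst hk
      have := e1 1 1
      linear_combination this - f1
    · have := e1 0 1
      apply mul_left_cancel₀ (pow_ne_zero 2 hk)
      linear_combination this
  refine ⟨1, k, g0, 3 * g1 - 2 * k * g0, 3 * q0, fun y z s => ?_⟩
  linear_combination (3 * y * z ^ 2 + 2 * k * z ^ 3) * f1 + z ^ 3 * f2

theorem scalar_main (g0 g1 g2 g3 q0 q1 q2 : ℂ)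
    (hd : ∀ y z s : ℂ, (q0 * y + q1 * z) ^ 2 * (g2 * y + g3 * z + q2 * s)
      - 2 * (q0 * y + q1 * z) * (q1 * y + q2 * z) * (g1 * y + g2 * z + q1 * s)
      + (q1 * y + q2 * z) ^ 2 * (g0 * y + g1 * z + q0 * s) = 0) :
    (q0 = 0 ∧ q1 = 0 ∧ q2 = 0) ∨ ∃ p q r t u : ℂ, ∀ y z s : ℂ,
      g0 * y ^ 3 + 3 * g1 * y ^ 2 * z + 3 * g2 * y * z ^ 2 + g3 * z ^ 3
        + 3 * s * (q0 * y ^ 2 + 2 * q1 * y * z + q2 * z ^ 2)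
      = (p * y + q * z) ^ 2 * (r * y + t * z + u * s) := by
  have D0 : q0 * (q0 * q2 - q1 ^ 2) = 0 := by linear_combination hd 1 0 1 - hd 1 0 0
  have D2 : q2 * (q0 * q2 - q1 ^ 2) = 0 := by linear_combination hd 0 1 1 - hd 0 1 0
  by_cases h0 : q0 = 0
  · by_cases h2 : q2 = 0
    · left
      subst h0 h2
      have := hd 1 1 1
      have h' := hd 1 1 0
      have : q1 ^ 3 = 0 := by linear_combination (-1/2) * this + (1/2) * h'
      exact ⟨rfl, by simpa using this, rfl⟩
    · right
      have hD := (mul_eq_zero.mp D2).resolve_left h2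
      obtain ⟨p, q, r, t, u, h⟩ := sq_case g3 g2 g1 g0 q2 q1 q0 h2 (by linear_combination hD)
        (fun y z => by linear_combination hd z y 0)
      exact ⟨q, p, t, r, u, fun y z s => by linear_combination h z y s⟩
  · right
    have hD := (mul_eq_zero.mp D0).resolve_left h0
    exact sq_case g0 g1 g2 g3 q0 q1 q2 h0 hD (fun y z => by linear_combination hd y z 0)

/-- The linear form with coefficients `u`. -/
noncomputable def linF (u : Fin 3 → ℂ) : MvPolynomial (Fin 3) ℂ := ∑ i, C (u i) * X i

theorem linF_isLinear (u : Fin 3 → ℂ) : IsLinearForm (linF u) := by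
  unfold IsLinearForm linF
  refine IsHomogeneous.sum _ _ _ fun i _ => ?_
  exact (isHomogeneous_X ℂ i).C_mul (u i)

theorem eval_linF (u x : Fin 3 → ℂ) : eval x (linF u) = ∑ i, u i * x i := by
  simp [linF]

theorem isHomogeneous_zero_eq_C {g : MvPolynomial (Fin 3) ℂ} (hg : g.IsHomogeneous 0) :
    ∃ r, g = C r :=
  ⟨_, totalDegree_eq_zero_iff_eq_C.mp ((totalDegree_zero_iff_isHomogeneous (p := g)).mpr hg)⟩

theorem linear_eq_linF {a : MvPolynomial (Fin 3) ℂ} (ha : a.IsHomogeneous 1) :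
    ∃ u, a = linF u ∧ ∀ i, pderiv i a = C (u i) := by
  have h : ∀ i, ∃ r, pderiv i a = C r := fun i => isHomogeneous_zero_eq_C (by simpa using ha.pderiv (i := i))
  choose u hu using h
  refine ⟨u, ?_, hu⟩
  have := ha.sum_X_mul_pderiv
  simp only [hu, one_smul] at this
  rw [← this, linF]
  exact Finset.sum_congr rfl fun i _ => mul_comm _ _

theorem pderiv_swap (f : MvPolynomial (Fin 3) ℂ) (i j : Fin 3) :
    pderiv i (pderiv j f) = pderiv j (pderiv i f) := by
  have h : ⁅(pderiv i : Derivation ℂ (MvPolynomial (Fin 3) ℂ) (MvPolynomial (Fin 3) ℂ)),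
      (pderiv j : Derivation ℂ (MvPolynomial (Fin 3) ℂ) (MvPolynomial (Fin 3) ℂ))⁆ = 0 := by
    apply MvPolynomial.derivation_ext
    intro k
    simp [Derivation.commutator_apply, pderiv_X, Pi.single_apply, apply_ite]
  have := congrArg (fun D => D f) h
  simp only [Derivation.commutator_apply, Derivation.coe_zero, Pi.zero_apply] at this
  exact sub_eq_zero.mp this

theorem exists_coeffs (f : MvPolynomial (Fin 3) ℂ) (hf : f.IsHomogeneous 3) :
    ∃ c : Fin 3 → Fin 3 → Fin 3 → ℂ, (∀ i j k, c i j k = c j i k) ∧ (∀ i j k, c i j k = c i k j) ∧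
      (∀ i j, pderiv i (pderiv j f) = linF (c i j)) ∧ ∀ x, 6 * eval x f = triF c x x x := by
  have h2 : ∀ i j, (pderiv i (pderiv j f)).IsHomogeneous 1 := fun i j => by
    simpa using (hf.pderiv (i := j)).pderiv (i := i)
  choose c hc hc' using fun i j => linear_eq_linF (h2 i j)
  have s1 : ∀ i j k, c i j k = c j i k := fun i j k => by
    apply C_injective (Fin 3) ℂ
    rw [← hc' i j k, ← hc' j i k, pderiv_swap f i j]
  have s2 : ∀ i j k, c i j k = c k j i := fun i j k => by
    apply C_injective (Fin 3) ℂ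
    rw [← hc' i j k, ← hc' k j i, pderiv_swap]
  refine ⟨c, s1, fun i j k => ?_, hc, fun x => ?_⟩
  · rw [s1 i j k, s2 j i k, s1 k i j]
  · have E1 := congrArg (eval x) hf.sum_X_mul_pderiv
    have E2 : ∀ j, ∑ i, x i * (∑ k, c i j k * x k) = 2 * eval x (pderiv j f) := fun j => by
      have := congrArg (eval x) (hf.pderiv (i := j)).sum_X_mul_pderiv
      simpa [hc, eval_linF] using this
    simp at E1
    have : triF c x x x = ∑ j, x j * ∑ i, x i * (∑ k, c i j k * x k) := by
      unfold triF
      rw [Finset.sum_comm]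
      simp only [Finset.mul_sum]
      refine Finset.sum_congr rfl fun i _ => Finset.sum_congr rfl fun j _ =>
        Finset.sum_congr rfl fun k _ => ?_
      ring
    rw [this]
    simp only [E2]
    calc _ = 2 * (3 * eval x f) := by ring
      _ = _ := by rw [← E1, Finset.mul_sum]; exact Finset.sum_congr rfl fun i _ => by ring

theorem dep_of_two (A B : MvPolynomial (Fin 3) ℂ) (p q p' q' p'' q'' : ℂ) :
    ¬ LinearIndependent ℂ ![p • A + q • B, p' • A + q' • B, p'' • A + q'' • B] := by
  obtain ⟨g, hg, h⟩ := (Matrix.exists_vecMul_eq_zero_iff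
    (M := !![p, q, 0; p', q', 0; p'', q'', 0])).mpr (by simp [Matrix.det_fin_three])
  have h0 := congrFun h 0
  have h1 := congrFun h 1
  simp [Matrix.vecMul, dotProduct, Fin.sum_univ_three] at h0 h1
  rw [Fintype.not_linearIndependent_iff]
  refine ⟨g, ?_, Function.ne_iff.mp hg⟩
  simp only [Fin.sum_univ_three, Matrix.cons_val_zero, Matrix.cons_val_one, Matrix.cons_val]
  have : g 0 • (p • A + q • B) + g 1 • (p' • A + q' • B) + g 2 • (p'' • A + q'' • B)
    = (g 0 * p + g 1 * p' + g 2 * p'') • A + (g 0 * q + g 1 * q' + g 2 * q'') • B := by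
    module
  rw [this, h0, h1]; simp

theorem one_to_three (f : MvPolynomial (Fin 3) ℂ) (hf : f.IsHomogeneous 3) (hH : hessianDet f = 0) :
    ∃ a b c : MvPolynomial (Fin 3) ℂ, IsLinearForm a ∧ IsLinearForm b ∧ IsLinearForm c ∧
       ¬ LinearIndependent ℂ ![a, b, c] ∧ f = a * b * c := by
  have hlin : ∀ (A B : MvPolynomial (Fin 3) ℂ) (p q : ℂ), IsLinearForm A → IsLinearForm B →
      IsLinearForm (p • A + q • B) := fun A B p q hA hB => by
    rw [smul_eq_C_mul, smul_eq_C_mul]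
    exact (IsHomogeneous.C_mul hA p).add (IsHomogeneous.C_mul hB q)
  obtain ⟨c, h1, h2, hc, hev⟩ := exists_coeffs f hf
  have hd : ∀ x, (matF c x).det = 0 := fun x => by
    have := congrArg (eval x) hH
    rw [hessianDet, RingHom.map_det, map_zero] at this
    rw [← this]
    congr 1
    ext i j
    simp [matF, hc, eval_linF]
  by_cases hne : ∃ w, triF c w w w ≠ 0
  swap
  · push Not at hne
    have : f = 0 := MvPolynomial.funext fun x => by
      have := hev x
      rw [hne] at this
      simpa using this
    refine ⟨0, 0, 0, isHomogeneous_zero _ _ _, isHomogeneous_zero _ _ _, isHomogeneous_zero _ _ _, ?_, by simp [this]⟩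
    intro hl
    exact hl.ne_zero 0 rfl
  obtain ⟨v, hv, hvv⟩ := exists_sing c h1 h2 hd hne
  obtain ⟨e, e', A, B, D, hx⟩ := exists_frame v hv
  have s23 := triF_swap23 c h1
  have s13 := triF_swap13 c h2
  have s12 : ∀ x y z, triF c x y z = triF c y x z := fun x y z => by
    rw [s13, s23, s13]
  have lin2 : ∀ p q r x y z u w, triF c u (p • x + q • y + r • z) w =
      p * triF c u x w + q * triF c u y w + r * triF c u z w := fun p q r x y z u w => by
    rw [s12, triF_lin, s12 x, s12 y, s12 z]
  have lin3 : ∀ p q r x y z u w, triF c u w (p • x + q • y + r • z) =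
      p * triF c u w x + q * triF c u w y + r * triF c u w z := fun p q r x y z u w => by
    rw [s13, triF_lin, s13 x, s13 y, s13 z]
  have n1 : triF c e e' e = triF c e e e' := s23 _ _ _
  have n2 : triF c e' e e = triF c e e e' := s13 _ _ _
  have n3 : triF c e' e e' = triF c e e' e' := s12 _ _ _
  have n4 : triF c e' e' e = triF c e e' e' := s13 _ _ _
  have n5 : triF c e v e = triF c e e v := s23 _ _ _
  have n6 : triF c v e e = triF c e e v := s13 _ _ _
  have n7 : triF c e' v e' = triF c e' e' v := s23 _ _ _
  have n8 : triF c v e' e' = triF c e' e' v := s13 _ _ _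
  have n9 : triF c e v e' = triF c e e' v := s23 _ _ _
  have n10 : triF c e' e v = triF c e e' v := s12 _ _ _
  have n11 : triF c e' v e = triF c e e' v := by rw [s23, n10]
  have n12 : triF c v e e' = triF c e e' v := by rw [s12, n9]
  have n13 : triF c v e' e = triF c e e' v := by rw [s12, n11]
  have z1 := hvv e
  have z2 := hvv e'
  have z3 := hvv v
  have z4 : triF c v e v = 0 := by rw [s12]; exact z1
  have z5 : triF c v e' v = 0 := by rw [s12]; exact z2
  have z6 : triF c v v e = 0 := by rw [s13]; exact z1
  have z7 : triF c v v e' = 0 := by rw [s13]; exact z2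
  have ex : ∀ y z s, triF c (y • e + z • e' + s • v) (y • e + z • e' + s • v) (y • e + z • e' + s • v)
      = triF c e e e * y ^ 3 + 3 * triF c e e e' * y ^ 2 * z + 3 * triF c e e' e' * y * z ^ 2
        + triF c e' e' e' * z ^ 3
        + 3 * s * (triF c e e v * y ^ 2 + 2 * triF c e e' v * y * z + triF c e' e' v * z ^ 2) := by
    intro y z s
    simp only [triF_lin, lin2, lin3, n1, n2, n3, n4, n5, n6, n7, n8, n9, n10, n11, n12, n13,
      z1, z2, z3, z4, z5, z6, z7]
    ring
  have key := scalar_main (triF c e e e) (triF c e e e') (triF c e e' e') (triF c e' e' e')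
    (triF c e e v) (triF c e e' v) (triF c e' e' v) (fun y z s => by
      have := gram_det c hd ![e, e', v] (y • e + z • e' + s • v)
      simp only [Matrix.det_fin_three, Matrix.of_apply, Matrix.cons_val_zero, Matrix.cons_val_one,
        Matrix.cons_val, triF_lin, n1, n2, n3, n4, n5, n6, n7, n8, n9, n10, n11, n12, n13,
        z1, z2, z3, z4, z5, z6, z7] at this
      linear_combination -this)
  have fx : ∀ x, 6 * eval x f = triF c e e e * (eval x (linF A)) ^ 3
        + 3 * triF c e e e' * (eval x (linF A)) ^ 2 * (eval x (linF B))
        + 3 * triF c e e' e' * (eval x (linF A)) * (eval x (linF B)) ^ 2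
        + triF c e' e' e' * (eval x (linF B)) ^ 3
        + 3 * (eval x (linF D)) * (triF c e e v * (eval x (linF A)) ^ 2
          + 2 * triF c e e' v * (eval x (linF A)) * (eval x (linF B))
          + triF c e' e' v * (eval x (linF B)) ^ 2) := fun x => by
    rw [hev x, ← ex]
    simp only [eval_linF]
    rw [← hx x]
  have hA := linF_isLinear A
  have hB := linF_isLinear B
  have hD := linF_isLinear D
  rcases key with ⟨k0, k1, k2⟩ | ⟨p, q, r, t, u, hk⟩
  · obtain ⟨p, q, p', q', p'', q'', hb⟩ := bin_cubic (triF c e e e) (3 * triF c e e e')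
      (3 * triF c e e' e') (triF c e' e' e')
    refine ⟨(p / 6) • linF A + (q / 6) • linF B, p' • linF A + q' • linF B, p'' • linF A + q'' • linF B,
      hlin _ _ _ _ hA hB, hlin _ _ _ _ hA hB, hlin _ _ _ _ hA hB, dep_of_two _ _ _ _ _ _ _ _,
      MvPolynomial.funext fun x => ?_⟩
    have := fx x
    have hb' := hb (eval x (linF A)) (eval x (linF B))
    rw [k0, k1, k2] at this
    simp only [map_mul, map_add, smul_eval]
    linear_combination (1 / 6) * this + (1 / 6) * hb'
  · refine ⟨p • linF A + q • linF B, p • linF A + q • linF B,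
      (r / 6) • linF A + (1 / 6 : ℂ) • (t • linF B + u • linF D), hlin _ _ _ _ hA hB,
      hlin _ _ _ _ hA hB, hlin _ _ _ _ hA (hlin _ _ _ _ hB hD), ?_, MvPolynomial.funext fun x => ?_⟩
    · intro hl
      have := hl.injective (a₁ := 0) (a₂ := 1) rfl
      simp at this
    · have := fx x
      have hk' := hk (eval x (linF A)) (eval x (linF B)) (eval x (linF D))
      simp only [map_mul, map_add, smul_eval]
      linear_combination (1 / 6) * this + (1 / 6) * hk'

theorem prod_case (a b : MvPolynomial (Fin 3) ℂ) (ha : IsLinearForm a) (hb : IsLinearForm b)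
    (p q : ℂ) (f : MvPolynomial (Fin 3) ℂ) (hf : f = a * b * (C p * a + C q * b)) :
    (∃ a₀ b₀ : ℂ, ∃ a b : MvPolynomial (Fin 3) ℂ, IsLinearForm a ∧ IsLinearForm b ∧
         f = C a₀ * a ^ 3 + C b₀ * b ^ 3) ∨
       (∃ a b : MvPolynomial (Fin 3) ℂ, IsLinearForm a ∧ IsLinearForm b ∧ f = a ^ 2 * b) := by
  by_cases hp : p = 0
  · right
    exact ⟨b, C q * a, hb, IsHomogeneous.C_mul ha q, by rw [hf, hp, C_0]; ring⟩
  by_cases hq : q = 0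
  · right
    exact ⟨a, C p * b, ha, IsHomogeneous.C_mul hb p, by rw [hf, hq, C_0]; ring⟩
  left
  obtain ⟨w, hw⟩ := quad_root 1 1 1 one_ne_zero
  refine ⟨(w - w ^ 2) / (9 * p * q), -((w - w ^ 2) / (9 * p * q)), C p * a + C (-w * q) * b,
    C p * a + C (-w ^ 2 * q) * b, (IsHomogeneous.C_mul ha _).add (IsHomogeneous.C_mul hb _),
    (IsHomogeneous.C_mul ha _).add (IsHomogeneous.C_mul hb _), MvPolynomial.funext fun x => ?_⟩
  rw [hf]
  simp only [map_mul, map_add, map_pow, eval_C]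
  generalize eval x a = s
  generalize eval x b = t
  have h3 : w ^ 2 = -1 - w := by linear_combination hw
  rw [h3]
  field_simp
  have h4 : w ^ 3 = 1 := by linear_combination (w - 1) * hw
  grind

theorem three_to_two (f : MvPolynomial (Fin 3) ℂ) (h :
    ∃ a b c : MvPolynomial (Fin 3) ℂ, IsLinearForm a ∧ IsLinearForm b ∧ IsLinearForm c ∧
       ¬ LinearIndependent ℂ ![a, b, c] ∧ f = a * b * c) :
    (∃ a₀ b₀ : ℂ, ∃ a b : MvPolynomial (Fin 3) ℂ, IsLinearForm a ∧ IsLinearForm b ∧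
         f = C a₀ * a ^ 3 + C b₀ * b ^ 3) ∨
       (∃ a b : MvPolynomial (Fin 3) ℂ, IsLinearForm a ∧ IsLinearForm b ∧ f = a ^ 2 * b) := by
  obtain ⟨a, b, c, ha, hb, hc, hl, rfl⟩ := h
  rw [Fintype.not_linearIndependent_iff] at hl
  obtain ⟨g, hg, i, hi⟩ := hl
  simp only [Fin.sum_univ_three, Matrix.cons_val_zero, Matrix.cons_val_one, Matrix.cons_val,
    smul_eq_C_mul] at hg
  have solve : ∀ (r s t : ℂ) (x y z : MvPolynomial (Fin 3) ℂ), r ≠ 0 →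
      C r * x + C s * y + C t * z = 0 → x = C (-s / r) * y + C (-t / r) * z := by
    intro r s t x y z hr h
    have e : C r⁻¹ * C r = (1 : MvPolynomial (Fin 3) ℂ) := by
      rw [← C_mul, inv_mul_cancel₀ hr, C_1]
    simp only [div_eq_mul_inv, C_mul, C_neg]
    linear_combination C r⁻¹ * h - x * e
  fin_cases i
  · have := solve (g 0) (g 1) (g 2) a b c hi hg
    exact prod_case b c hb hc _ _ _ (by rw [← this]; ring)
  · have := solve (g 1) (g 0) (g 2) b a c hi (by rw [← hg]; ring)
    exact prod_case a c ha hc _ _ _ (by rw [← this]; ring)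
  · have := solve (g 2) (g 0) (g 1) c a b hi (by rw [← hg]; ring)
    exact prod_case a b ha hb _ _ _ (by rw [← this])

theorem two_to_one (f : MvPolynomial (Fin 3) ℂ) (h :
    (∃ a₀ b₀ : ℂ, ∃ a b : MvPolynomial (Fin 3) ℂ, IsLinearForm a ∧ IsLinearForm b ∧
         f = C a₀ * a ^ 3 + C b₀ * b ^ 3) ∨
       (∃ a b : MvPolynomial (Fin 3) ℂ, IsLinearForm a ∧ IsLinearForm b ∧ f = a ^ 2 * b)) :
    hessianDet f = 0 := by
  rcases h with ⟨a₀, b₀, a, b, ha, hb, rfl⟩ | ⟨a, b, ha, hb, rfl⟩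
  all_goals
    obtain ⟨u, -, hu⟩ := linear_eq_linF ha
    obtain ⟨v, -, hv⟩ := linear_eq_linF hb
  · have : ∀ i j, pderiv i (pderiv j (C a₀ * a ^ 3 + C b₀ * b ^ 3)) =
        6 * C a₀ * a * C (u i) * C (u j) + 6 * C b₀ * b * C (v i) * C (v j) := by
      intro i j
      have e2 : pderiv i (2 : MvPolynomial (Fin 3) ℂ) = 0 := (pderiv i).map_natCast 2
      have e3 : pderiv i (3 : MvPolynomial (Fin 3) ℂ) = 0 := (pderiv i).map_natCast 3
      simp [hu, hv, e2, e3]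
      ring
    simp only [hessianDet, this, Matrix.det_fin_three, Matrix.of_apply]
    ring
  · have : ∀ i j, pderiv i (pderiv j (a ^ 2 * b)) =
        2 * b * C (u i) * C (u j) + 2 * a * (C (u i) * C (v j) + C (v i) * C (u j)) := by
      intro i j
      have e2 : pderiv i (2 : MvPolynomial (Fin 3) ℂ) = 0 := (pderiv i).map_natCast 2
      have e3 : pderiv i (3 : MvPolynomial (Fin 3) ℂ) = 0 := (pderiv i).map_natCast 3
      simp [hu, hv, e2, e3]
      ring
    simp only [hessianDet, this, Matrix.det_fin_three, Matrix.of_apply]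
    ring

theorem stmt3 (f : MvPolynomial (Fin 3) ℂ) (hf : f.IsHomogeneous 3) :
    [hessianDet f = 0,
     (∃ a₀ b₀ : ℂ, ∃ a b : MvPolynomial (Fin 3) ℂ, IsLinearForm a ∧ IsLinearForm b ∧
         f = C a₀ * a ^ 3 + C b₀ * b ^ 3) ∨
       (∃ a b : MvPolynomial (Fin 3) ℂ, IsLinearForm a ∧ IsLinearForm b ∧ f = a ^ 2 * b),
     ∃ a b c : MvPolynomial (Fin 3) ℂ, IsLinearForm a ∧ IsLinearForm b ∧ IsLinearForm c ∧
       ¬ LinearIndependent ℂ ![a, b, c] ∧ f = a * b * c].TFAE := by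
  tfae_have 1 → 3 := one_to_three f hf
  tfae_have 3 → 2 := three_to_two f
  tfae_have 2 → 1 := two_to_one f
  tfae_finish
end

section
/- For a ternary cubic form f over ℂ, the following are equivalent: (1) the Hessian determinant det(∂ᵢ∂ⱼ f) is the zero polynomial; (2) the three partial derivatives ∂₁f, ∂₂f, ∂₃f are linearly dependent over ℂ; (3) there exists a nonzero vector (z₁,z₂,z₃) ∈ ℂ³ with z₁∂₁f + z₂∂₂f + z₃∂₃f = 0; (4) there exist linear forms a, b and constants g₀, h₀, k₀, i₀ ∈ ℂ such that f = g₀a³ + h₀a²b + k₀ab² + i₀b³; (5) f = a·b·c for some linear forms a, b, c whose coefficient vectors are linearly dependent over ℂ. -/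
open MvPolynomial

/-- Trilinear forms on `ℂ³`. -/
abbrev Tri := (Fin 3 → ℂ) →ₗ[ℂ] (Fin 3 → ℂ) →ₗ[ℂ] (Fin 3 → ℂ) →ₗ[ℂ] ℂ

lemma tri_coeffs (ε η α β γ δ : ℂ) (hη : ε = 0 → η = 0)
    (h : ∀ u v s : ℂ, u * ((α * v + β * s) * (ε * u + γ * v + δ * s) - (β * v + γ * s) ^ 2)
      - η * s ^ 2 * (α * v + β * s) = 0) :
    ∃ p q : ℂ, (p ≠ 0 ∨ q ≠ 0) ∧ q * ε = 0 ∧ p * α + q * β = 0 ∧ p * β + q * γ = 0 ∧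
      p * γ + q * δ = 0 := by
  by_cases hε : ε = 0
  · obtain rfl := hη hε
    subst hε
    have h1 : α * γ = β ^ 2 := by linear_combination h 1 1 0
    have h2 : β * δ = γ ^ 2 := by linear_combination h 1 0 1
    have h3 : α * δ = β * γ := by linear_combination h 1 1 1 - h1 - h2
    by_cases hab : β = 0 ∧ α = 0
    · obtain ⟨rfl, rfl⟩ := hab
      have : γ = 0 := by
        have : γ ^ 2 = 0 := by linear_combination -h2
        exact pow_eq_zero_iff (two_ne_zero) |>.1 this
      exact ⟨1, 0, by simp [this]⟩
    · refine ⟨β, -α, ?_, by simp, by ring, by linear_combination -h1, by linear_combination -h3⟩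
      by_contra hc
      push Not at hc
      exact hab ⟨hc.1, neg_eq_zero.1 hc.2⟩
  · have hα : α = 0 := by
      have : α * ε = 0 := by
        linear_combination (1 / 2) * (h 2 1 0 - 2 * h 1 1 0)
      exact (mul_eq_zero.1 this).resolve_right hε
    subst hα
    have hβ : β = 0 := by
      have : β * ε = 0 := by
        linear_combination (1 / 2) * (h 1 0 1 + h (-1) 0 1) - h 0 0 1 
      exact (mul_eq_zero.1 this).resolve_right hε
    subst hβ
    have hγ : γ = 0 := by
      have : γ ^ 2 = 0 := by linear_combination -h 1 0 1
      exact pow_eq_zero_iff (two_ne_zero) |>.1 this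
    exact ⟨1, 0, by simp [hγ]⟩

lemma tri_core (T : Tri) (s1 : ∀ x y w, T x y w = T y x w) (s2 : ∀ x y w, T x y w = T x w y)
    (H : ∀ x, ∃ z, z ≠ 0 ∧ ∀ w, T x z w = 0) : ∃ z, z ≠ 0 ∧ ∀ y w, T z y w = 0 := by
  by_cases h0 : ∀ x, T x x x = 0
  · refine ⟨fun _ => 1, fun h => one_ne_zero (congrFun h 0), ?_⟩
    have key : ∀ x y w, T x y w = 0 := by
      intro x y w
      have a1 := h0 (x + y + w)
      have a2 := h0 (x + y)
      have a3 := h0 (x + w)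
      have a4 := h0 (y + w)
      have b1 := h0 x
      have b2 := h0 y
      have b3 := h0 w
      simp only [map_add, LinearMap.add_apply] at a1 a2 a3 a4
      have c1 := s1 y x w
      have c2 := s2 x w y
      have c3 := s1 y w x
      have c4 := s2 w x y
      have c5 := s1 w x y
      have c6 := s2 y x w
      linear_combination (1 / 6) * (a1 - a2 - a3 - a4 + b1 + b2 + b3) 
        - (1/6) * (c1 + c2 + (c6.symm.trans c1) + c5.trans c2 + (c4.symm.trans (c5.trans c2)))
    exact key _
  push Not at h0
  obtain ⟨x, hx⟩ := h0
  obtain ⟨z, hz, hxz⟩ := H x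
  have hxxz : T x x z = 0 := by rw [s2]; exact hxz x
  have hli : LinearIndependent ℂ ![x, z] := by
    rw [LinearIndependent.pair_iff]
    intro s t hst
    have : T x x (s • x + t • z) = 0 := by rw [hst]; simp
    simp only [map_add, map_smul, hxxz, smul_eq_mul, mul_zero, add_zero] at this
    have hs : s = 0 := (mul_eq_zero.1 this).resolve_right hx
    subst hs
    simp only [zero_smul, zero_add] at hst
    exact ⟨rfl, (smul_eq_zero.1 hst).resolve_right hz⟩
  obtain ⟨w', hw'⟩ := exists_linearIndependent_cons_of_lt_finrank
    (R := ℂ) (M := Fin 3 → ℂ) (v := ![x, z]) hli (by simp)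
  obtain ⟨w, hw⟩ : ∃ w, w = w' - (T x x w' / T x x x) • x := ⟨_, rfl⟩
  have hxxw : T x x w = 0 := by
    rw [hw]; simp only [map_sub, map_smul, smul_eq_mul]; field_simp; ring
  have hli3 : LinearIndependent ℂ ![x, z, w] := by
    rw [Fintype.linearIndependent_iff] at hw' ⊢
    intro g hg
    have := hw' ![g 2, g 0 - g 2 * (T x x w' / T x x x), g 1] (by
      simp only [Fin.sum_univ_three] at hg ⊢
      rw [← hg, hw]
      refine (Fin.sum_univ_three _).trans ?_
      change g 2 • w' + (g 0 - g 2 * (T x x w' / T x x x)) • x + g 1 • z =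
        g 0 • x + g 1 • z + g 2 • (w' - (T x x w' / T x x x) • x)
      module)
    have e0 := this 0
    have e1 := this 1
    have e2 := this 2
    simp at e0 e1 e2
    simp [e0] at e1
    intro i; fin_cases i <;> assumption
  let b := basisOfLinearIndependentOfCardEqFinrank hli3 (by simp)
  have hb : ⇑b = ![x, z, w] := coe_basisOfLinearIndependentOfCardEqFinrank _ _
  have hexp : ∀ y, ∃ p q r : ℂ, y = p • x + q • z + r • w := by
    intro y
    refine ⟨b.repr y 0, b.repr y 1, b.repr y 2, ?_⟩
    conv_lhs => rw [← b.sum_repr y]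
    simp [Fin.sum_univ_three, hb]
  have hdet : ∀ y, (Matrix.of fun i j => T y (![x, z, w] i) (![x, z, w] j)).det = 0 := by
    intro y
    obtain ⟨k, hk, hyk⟩ := H y
    obtain ⟨p, q, r, hpqr⟩ := hexp k
    apply Matrix.exists_vecMul_eq_zero_iff.1
    refine ⟨![p, q, r], ?_, ?_⟩
    · intro h
      apply hk
      have e0 := congrFun h 0
      have e1 := congrFun h 1
      have e2 := congrFun h 2
      simp at e0 e1 e2
      simp [hpqr, e0, e1, e2]
    · ext j
      have := hyk (![x, z, w] j)
      rw [hpqr] at this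
      simp only [map_add, map_smul, LinearMap.add_apply, LinearMap.smul_apply, smul_eq_mul] at this
      simp [Matrix.vecMul, dotProduct, Fin.sum_univ_three]
      exact this
  have hzx : ∀ y, T z x y = 0 := fun y => by rw [s1]; exact hxz y
  have t1 : ∀ y, T z y x = 0 := fun y => by rw [s2]; exact hzx y
  have t2 : T w z x = 0 := by rw [s1]; exact t1 w
  have t3 : T w x x = 0 := by rw [s1, s2]; exact hxxw
  have t4 : T x w x = 0 := by rw [s2]; exact hxxw
  have t5 : T w x w = T x w w := s1 _ _ _
  have t6 : T w w x = T x w w := by rw [s2]; exact t5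
  have t7 : T z w z = T z z w := s2 _ _ _
  have t8 : T w z z = T z z w := by rw [s1]; exact t7
  have t9 : T w z w = T z w w := s1 _ _ _
  have t10 : T w w z = T z w w := by rw [s2]; exact t9
  have t11 : T x w z = 0 := by rw [s2]; exact hxz w
  have t12 : T w x z = 0 := by rw [s1]; exact t11
  obtain ⟨p, q, hpq, k0, k1, k2, k3⟩ := tri_coeffs (T x w w / T x x x) (T x w w ^ 2) (T z z z) (T z z w)
    (T z w w) (T w w w) (by simp [hx]) (by
      intro u v s
      have := hdet ((u / T x x x) • x + v • z + s • w)
      simp [Matrix.det_fin_three, hxz, hzx, t1, t2, t3, t4, t5, t6, t7, t8, t9, t10, t11, t12,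
        hxxw, hx, hxxz] at this
      linear_combination this)
  have k0' : q * T x w w = 0 := by
    field_simp at k0; simpa using k0
  refine ⟨p • z + q • w, ?_, ?_⟩
  · intro h
    have := Fintype.linearIndependent_iff.1 hli3 ![0, p, q] (by simpa [Fin.sum_univ_three] using h)
    have e1 := this 1
    have e2 := this 2
    simp at e1 e2
    simp [e1, e2] at hpq
  · intro y y'
    obtain ⟨a, b, c, rfl⟩ := hexp y
    obtain ⟨a', b', c', rfl⟩ := hexp y'
    simp only [map_add, map_smul, LinearMap.add_apply, LinearMap.smul_apply, smul_eq_mul,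
      hxz, hzx, t1, t2, t3, t4, t5, t6, t7, t8, t9, t10, t11, t12, hxxw]
    linear_combination (a * c' + c * a') * k0' + b * b' * k1 + (b * c' + c * b') * k2
      + c * c' * k3

lemma tri_expand (T : Tri) (s1 : ∀ x y w, T x y w = T y x w) (s2 : ∀ x y w, T x y w = T x w y)
    (z : Fin 3 → ℂ) (hz : z ≠ 0) (h : ∀ y w, T z y w = 0) :
    ∃ l m : (Fin 3 → ℂ) →ₗ[ℂ] ℂ, ∃ g h k i : ℂ, ∀ x, T x x x =
      g * l x ^ 3 + h * l x ^ 2 * m x + k * l x * m x ^ 2 + i * m x ^ 3 := by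
  have hli : LinearIndependent ℂ ![z] := LinearIndependent.of_subsingleton 0 hz
  obtain ⟨w, hw⟩ := exists_linearIndependent_cons_of_lt_finrank
    (R := ℂ) (M := Fin 3 → ℂ) (v := ![z]) hli (by simp)
  obtain ⟨w', hw'⟩ := exists_linearIndependent_cons_of_lt_finrank
    (R := ℂ) (M := Fin 3 → ℂ) hw (by simp)
  let b := basisOfLinearIndependentOfCardEqFinrank hw' (by simp)
  have hb : ⇑b = ![w', w, z] := coe_basisOfLinearIndependentOfCardEqFinrank _ _
  refine ⟨b.coord 0, b.coord 1, T w' w' w', 3 * T w' w' w, 3 * T w' w w, T w w w, ?_⟩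
  intro x
  have hx : x = b.coord 0 x • w' + b.coord 1 x • w + b.coord 2 x • z := by
    conv_lhs => rw [← b.sum_repr x]
    simp [Fin.sum_univ_three, hb]
  generalize b.coord 0 x = p at *
  generalize b.coord 1 x = q at *
  generalize b.coord 2 x = r at *
  subst hx
  have h1 : ∀ y w, T y z w = 0 := fun y w => by rw [s1]; exact h y w
  have h2 : ∀ y w, T y w z = 0 := fun y w => by rw [s2]; exact h1 y w
  simp only [map_add, map_smul, LinearMap.add_apply, LinearMap.smul_apply, smul_eq_mul, h, h1, h2,
    s1 w w' _, s2 w' w w', s2 w w w']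
  ring

lemma cubic_factor (g h k i : ℂ) : ∃ p q r s t u : ℂ, g = p * r * t ∧
    h = p * r * u + p * s * t + q * r * t ∧ k = p * s * u + q * r * u + q * s * t ∧
    i = q * s * u := by
  have quad : ∀ h k i : ℂ, ∃ r s t u : ℂ, h = r * t ∧ k = r * u + s * t ∧ i = s * u := by
    intro h k i
    by_cases hh : h = 0
    · exact ⟨0, 1, k, i, by simp [hh]⟩
    · obtain ⟨x, hx⟩ := IsAlgClosed.exists_root (Polynomial.C h * Polynomial.X ^ 2 +
        Polynomial.C k * Polynomial.X + Polynomial.C i)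
        (by rw [Polynomial.degree_quadratic hh]; decide)
      simp [Polynomial.IsRoot] at hx
      exact ⟨1, -x, h, k + h * x, by ring, by ring, by linear_combination hx⟩
  by_cases hg : g = 0
  · obtain ⟨r, s, t, u, h1, h2, h3⟩ := quad h k i
    exact ⟨0, 1, r, s, t, u, by simp [hg], by simp [h1], by simp [h2], by simp [h3]⟩
  · obtain ⟨x, hx⟩ := IsAlgClosed.exists_root (Polynomial.C g * Polynomial.X ^ 3 +
        Polynomial.C h * Polynomial.X ^ 2 +
        Polynomial.C k * Polynomial.X + Polynomial.C i)
        (by rw [Polynomial.degree_cubic hg]; decide)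
    simp [Polynomial.IsRoot] at hx
    obtain ⟨r, s, t, u, h1, h2, h3⟩ := quad g (h + g * x) (k + (h + g * x) * x)
    exact ⟨1, -x, r, s, t, u, by linear_combination h1, by linear_combination h2 - x * h1,
      by linear_combination h3 - x * h2, by linear_combination hx - x * h3⟩

lemma exists_tri (f : MvPolynomial (Fin 3) ℂ) (hf : f.IsHomogeneous 3) :
    ∃ T : Tri, (∀ x y w, T x y w = T y x w) ∧ (∀ x y w, T x y w = T x w y) ∧
      (∀ x, T x x x = 6 * eval x f) ∧
      (∀ x y w, T x y w = ∑ i, ∑ j, y i * w j * eval x (pderiv i (pderiv j f))) ∧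
      (∀ z, (∀ x, T x x z = 2 * ∑ i, z i * eval x (pderiv i f))) := by
  have hd0 : ∀ i j k, ∃ c : ℂ, pderiv i (pderiv j (pderiv k f)) = C c := by
    intro i j k
    have : (pderiv i (pderiv j (pderiv k f))).IsHomogeneous 0 :=
      ((hf.pderiv (i := k)).pderiv (i := j)).pderiv (i := i)
    exact ⟨_, (totalDegree_eq_zero_iff_eq_C).1 (Nat.le_zero.1 this.totalDegree_le)⟩
  choose c hc using hd0
  have comm : ∀ i j (g : MvPolynomial (Fin 3) ℂ), pderiv i (pderiv j g) = pderiv j (pderiv i g) :=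
    fun i j g => by
      by_cases hij : i = j
      · rw [hij]
      · ext m
        simp only [coeff_pderiv, Finsupp.add_apply, Finsupp.single_apply, if_neg hij,
          if_neg (Ne.symm hij), add_right_comm, add_zero, Nat.cast_add]
        ring
  have c1 : ∀ i j k, c i j k = c j i k := fun i j k => by
    apply C_injective (Fin 3) ℂ; rw [← hc, ← hc, comm]
  have c2 : ∀ i j k, c i j k = c i k j := fun i j k => by
    apply C_injective (Fin 3) ℂ; rw [← hc, ← hc, comm j k]
  let T : Tri := ∑ i, (LinearMap.proj i).smulRight (Matrix.toLinearMap₂' ℂ (Matrix.of (c i)))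
  have hT : ∀ x y w, T x y w = ∑ i, ∑ j, ∑ k, x i * (y j * (w k * c i j k)) := by
    intro x y w
    simp [T, Matrix.toLinearMap₂'_apply, LinearMap.sum_apply, Finset.mul_sum]
  have ev2 : ∀ x j k, eval x (pderiv j (pderiv k f)) = ∑ i, x i * c i j k := by
    intro x j k
    have := ((hf.pderiv (i := k)).pderiv (i := j)).sum_X_mul_pderiv
    have := congrArg (eval x) this
    simp [hc, Fin.sum_univ_three] at this
    simp [Fin.sum_univ_three, this]
  have ev1 : ∀ x k, 2 * eval x (pderiv k f) = ∑ i, x i * eval x (pderiv i (pderiv k f)) := by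
    intro x k
    have := (hf.pderiv (i := k)).sum_X_mul_pderiv
    have := congrArg (eval x) this
    simp [Fin.sum_univ_three] at this
    simp [Fin.sum_univ_three, this]
  have ev0 : ∀ x, 3 * eval x f = ∑ i, x i * eval x (pderiv i f) := by
    intro x
    have := hf.sum_X_mul_pderiv
    have := congrArg (eval x) this
    simp [Fin.sum_univ_three] at this
    simp [Fin.sum_univ_three, this]
  have h4 : ∀ x y w, T x y w = ∑ i, ∑ j, y i * w j * eval x (pderiv i (pderiv j f)) := by
    intro x y w
    rw [hT]
    simp only [ev2, Fin.sum_univ_three]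
    ring
  have h5 : ∀ z, (∀ x, T x x z = 2 * ∑ i, z i * eval x (pderiv i f)) := by
    intro z x
    rw [h4]
    have : 2 * ∑ i, z i * eval x (pderiv i f) = ∑ i, z i * (2 * eval x (pderiv i f)) := by
      simp only [Fin.sum_univ_three]; ring
    rw [this]
    simp only [ev1, Fin.sum_univ_three]
    ring
  refine ⟨T, ?_, ?_, ?_, h4, h5⟩
  · intro x y w
    rw [hT, hT, Finset.sum_comm]
    refine Finset.sum_congr rfl fun i _ => Finset.sum_congr rfl fun j _ =>
      Finset.sum_congr rfl fun k _ => ?_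
    rw [c1]; ring
  · intro x y w
    rw [hT, hT]
    refine Finset.sum_congr rfl fun i _ => ?_
    rw [Finset.sum_comm]
    refine Finset.sum_congr rfl fun j _ =>
      Finset.sum_congr rfl fun k _ => ?_
    rw [c2]; ring
  · intro x
    rw [h5, ← ev0]; ring

lemma one_three (f : MvPolynomial (Fin 3) ℂ) (hf : f.IsHomogeneous 3) (h : hessianDet f = 0) :
    ∃ z : Fin 3 → ℂ, z ≠ 0 ∧
       C (z 0) * pderiv 0 f + C (z 1) * pderiv 1 f + C (z 2) * pderiv 2 f = 0 := by
  obtain ⟨T, s1, s2, -, h4, h5⟩ := exists_tri f hf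
  obtain ⟨z, hz, hzT⟩ := tri_core T s1 s2 (by
    intro x
    have : (Matrix.of fun i j : Fin 3 => eval x (pderiv i (pderiv j f))).det = 0 := by
      have := congrArg (eval x) h
      rw [hessianDet, RingHom.map_det, map_zero] at this
      exact this
    obtain ⟨v, hv, hv0⟩ := Matrix.exists_vecMul_eq_zero_iff.2 this
    refine ⟨v, hv, fun w => ?_⟩
    rw [h4]
    have e0 := congrFun hv0 0
    have e1 := congrFun hv0 1
    have e2 := congrFun hv0 2
    simp [Matrix.vecMul, dotProduct, Fin.sum_univ_three] at e0 e1 e2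
    simp only [Fin.sum_univ_three]
    linear_combination w 0 * e0 + w 1 * e1 + w 2 * e2)
  refine ⟨z, hz, MvPolynomial.funext fun x => ?_⟩
  have := h5 z x
  rw [s2, s1, hzT] at this
  simp [Fin.sum_univ_three] at this
  simp
  exact this

lemma three_four (f : MvPolynomial (Fin 3) ℂ) (hf : f.IsHomogeneous 3) (h : ∃ z : Fin 3 → ℂ, z ≠ 0 ∧
       C (z 0) * pderiv 0 f + C (z 1) * pderiv 1 f + C (z 2) * pderiv 2 f = 0) :
    ∃ a b : MvPolynomial (Fin 3) ℂ, IsLinearForm a ∧ IsLinearForm b ∧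
       ∃ g₀ h₀ k₀ i₀ : ℂ,
         f = C g₀ * a ^ 3 + C h₀ * a ^ 2 * b + C k₀ * a * b ^ 2 + C i₀ * b ^ 3 := by
  obtain ⟨T, s1, s2, h3, h4, -⟩ := exists_tri f hf
  obtain ⟨z, hz, h⟩ := h
  obtain ⟨l, m, g, hh, k, i, hx⟩ := tri_expand T s1 s2 z hz (by
    intro y w
    rw [s1, s2, h4]
    have key : ∀ i, eval y (pderiv i (C (z 0) * pderiv 0 f + C (z 1) * pderiv 1 f
      + C (z 2) * pderiv 2 f)) = 0 := fun i => by rw [h]; simp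
    simp [pderiv_mul] at key
    simp only [Fin.sum_univ_three]
    linear_combination w 0 * key 0 + w 1 * key 1 + w 2 * key 2)
  have lin : ∀ l : (Fin 3 → ℂ) →ₗ[ℂ] ℂ, ∃ a : MvPolynomial (Fin 3) ℂ, IsLinearForm a ∧
      ∀ x, eval x a = l x := by
    intro l
    refine ⟨∑ i, C (l (Pi.single i 1)) * X i, ?_, ?_⟩
    · apply IsHomogeneous.sum
      intro i _
      simpa using (isHomogeneous_C (Fin 3) (l (Pi.single i 1))).mul (isHomogeneous_X ℂ i)
    · intro x
      conv_rhs => rw [LinearMap.pi_apply_eq_sum_univ l x]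
      have hsingle : ∀ i : Fin 3, (Pi.single i 1 : Fin 3 → ℂ) = fun j => if i = j then 1 else 0 := by
        intro i; ext j; simp [Pi.single_apply, eq_comm]
      simp only [map_sum, map_mul, eval_C, eval_X, hsingle, smul_eq_mul, mul_comm]
  obtain ⟨a, ha, ha'⟩ := lin l
  obtain ⟨b, hb, hb'⟩ := lin m
  refine ⟨a, b, ha, hb, g / 6, hh / 6, k / 6, i / 6, MvPolynomial.funext fun x => ?_⟩
  have := hx x
  rw [h3] at this
  simp [ha', hb']
  linear_combination this / 6

lemma four_five (f : MvPolynomial (Fin 3) ℂ) (h : ∃ a b : MvPolynomial (Fin 3) ℂ,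
      IsLinearForm a ∧ IsLinearForm b ∧ ∃ g₀ h₀ k₀ i₀ : ℂ,
         f = C g₀ * a ^ 3 + C h₀ * a ^ 2 * b + C k₀ * a * b ^ 2 + C i₀ * b ^ 3) :
    ∃ a b c : MvPolynomial (Fin 3) ℂ, IsLinearForm a ∧ IsLinearForm b ∧ IsLinearForm c ∧
       ¬ LinearIndependent ℂ ![a, b, c] ∧ f = a * b * c := by
  obtain ⟨a, b, ha, hb, g, h, k, i, rfl⟩ := h
  obtain ⟨p, q, r, s, t, u, rfl, rfl, rfl, rfl⟩ := cubic_factor g h k i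
  have lin : ∀ p q : ℂ, IsLinearForm (C p * a + C q * b) := by
    intro p q
    have h1 := (isHomogeneous_C (Fin 3) p).mul ha
    have h2 := (isHomogeneous_C (Fin 3) q).mul hb
    simp only [zero_add] at h1 h2
    exact h1.add h2
  refine ⟨C p * a + C q * b, C r * a + C s * b, C t * a + C u * b, lin _ _, lin _ _, lin _ _,
    ?_, ?_⟩
  · have hd : (!![p, r, t; q, s, u; 0, 0, 0] : Matrix (Fin 3) (Fin 3) ℂ).det = 0 := by
      simp [Matrix.det_fin_three]
    obtain ⟨v, hv, hv0⟩ := Matrix.exists_mulVec_eq_zero_iff.2 hd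
    have e0 := congrFun hv0 0
    have e1 := congrFun hv0 1
    simp [Matrix.mulVec, dotProduct, Fin.sum_univ_three] at e0 e1
    rw [Fintype.not_linearIndependent_iff]
    refine ⟨v, ?_, Function.ne_iff.1 hv⟩
    simp only [Fin.sum_univ_three, smul_eq_C_mul]
    have e0' := congrArg (C (σ := Fin 3)) e0
    have e1' := congrArg (C (σ := Fin 3)) e1
    simp only [map_add, map_mul, map_zero] at e0' e1'
    simp
    linear_combination a * e0' + b * e1'
  · simp only [map_add, map_mul]
    ring

lemma five_three (f : MvPolynomial (Fin 3) ℂ) (h : ∃ a b c : MvPolynomial (Fin 3) ℂ,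
      IsLinearForm a ∧ IsLinearForm b ∧ IsLinearForm c ∧
       ¬ LinearIndependent ℂ ![a, b, c] ∧ f = a * b * c) :
    ∃ z : Fin 3 → ℂ, z ≠ 0 ∧
       C (z 0) * pderiv 0 f + C (z 1) * pderiv 1 f + C (z 2) * pderiv 2 f = 0 := by
  obtain ⟨a, b, c, ha, hb, hc, hl, rfl⟩ := h
  have cst : ∀ l, IsLinearForm l → ∃ v : Fin 3 → ℂ, ∀ i, pderiv i l = C (v i) := by
    intro l hl
    have : ∀ i, ∃ v : ℂ, pderiv i l = C v := fun i =>
      ⟨_, (totalDegree_eq_zero_iff_eq_C).1 (Nat.le_zero.1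
        (IsHomogeneous.pderiv (i := i) hl).totalDegree_le)⟩
    exact ⟨_, fun i => (this i).choose_spec⟩
  obtain ⟨va, hva⟩ := cst a ha
  obtain ⟨vb, hvb⟩ := cst b hb
  obtain ⟨vc, hvc⟩ := cst c hc
  rw [Fintype.not_linearIndependent_iff] at hl
  obtain ⟨g, hg, hg0⟩ := hl
  have hd : (Matrix.of ![va, vb, vc]).det = 0 := by
    apply Matrix.exists_vecMul_eq_zero_iff.1
    refine ⟨g, Function.ne_iff.2 hg0, ?_⟩
    ext j
    have := congrArg (pderiv j) hg
    simp [Fin.sum_univ_three, smul_eq_C_mul, pderiv_mul, hva, hvb, hvc] at this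
    simp only [← map_mul, ← map_add] at this
    rw [← C_0] at this
    have := C_injective _ _ this
    simpa [Matrix.vecMul, dotProduct, Fin.sum_univ_three] using this
  obtain ⟨z, hz, hz0⟩ := Matrix.exists_mulVec_eq_zero_iff.2 hd
  refine ⟨z, hz, ?_⟩
  have e0 := congrArg (C (σ := Fin 3)) (congrFun hz0 0)
  have e1 := congrArg (C (σ := Fin 3)) (congrFun hz0 1)
  have e2 := congrArg (C (σ := Fin 3)) (congrFun hz0 2)
  simp [Matrix.mulVec, dotProduct, Fin.sum_univ_three] at e0 e1 e2
  simp only [pderiv_mul, hva, hvb, hvc]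
  linear_combination b * c * e0 + a * c * e1 + a * b * e2

lemma three_one (f : MvPolynomial (Fin 3) ℂ) (h : ∃ z : Fin 3 → ℂ, z ≠ 0 ∧
       C (z 0) * pderiv 0 f + C (z 1) * pderiv 1 f + C (z 2) * pderiv 2 f = 0) :
    hessianDet f = 0 := by
  obtain ⟨z, hz, h⟩ := h
  apply Matrix.exists_mulVec_eq_zero_iff.1
  refine ⟨fun i => C (z i), ?_, ?_⟩
  · intro h0
    apply hz
    ext i
    have := congrFun h0 i
    simpa using this
  · ext1 i
    have := congrArg (pderiv i) h
    simp [pderiv_mul] at this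
    simp only [Matrix.mulVec, dotProduct, Fin.sum_univ_three, Matrix.of_apply, Pi.zero_apply]
    linear_combination this

lemma two_three (f : MvPolynomial (Fin 3) ℂ) :
    (¬ LinearIndependent ℂ ![pderiv 0 f, pderiv 1 f, pderiv 2 f]) ↔ ∃ z : Fin 3 → ℂ, z ≠ 0 ∧
       C (z 0) * pderiv 0 f + C (z 1) * pderiv 1 f + C (z 2) * pderiv 2 f = 0 := by
  rw [Fintype.not_linearIndependent_iff]
  refine exists_congr fun z => ?_
  rw [Function.ne_iff, and_comm]
  simp [Fin.sum_univ_three, smul_eq_C_mul]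

theorem stmt4 (f : MvPolynomial (Fin 3) ℂ) (hf : f.IsHomogeneous 3) :
    [hessianDet f = 0,
     ¬ LinearIndependent ℂ ![pderiv 0 f, pderiv 1 f, pderiv 2 f],
     ∃ z : Fin 3 → ℂ, z ≠ 0 ∧
       C (z 0) * pderiv 0 f + C (z 1) * pderiv 1 f + C (z 2) * pderiv 2 f = 0,
     ∃ a b : MvPolynomial (Fin 3) ℂ, IsLinearForm a ∧ IsLinearForm b ∧
       ∃ g₀ h₀ k₀ i₀ : ℂ,
         f = C g₀ * a ^ 3 + C h₀ * a ^ 2 * b + C k₀ * a * b ^ 2 + C i₀ * b ^ 3,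
     ∃ a b c : MvPolynomial (Fin 3) ℂ, IsLinearForm a ∧ IsLinearForm b ∧ IsLinearForm c ∧
       ¬ LinearIndependent ℂ ![a, b, c] ∧ f = a * b * c].TFAE := by
  tfae_have 1 → 3 := one_three f hf
  tfae_have 3 → 1 := three_one f
  tfae_have 2 ↔ 3 := two_three f
  tfae_have 3 → 4 := three_four f hf
  tfae_have 4 → 5 := four_five f
  tfae_have 5 → 3 := five_three f
  tfae_finish
end

section
/- Let f be a ternary cubic form over ℂ. The bordered Hessian of f with border (u₁,u₂,u₃) is the zero polynomial in the six variables x₁, x₂, x₃, u₁, u₂, u₃ if and only if f = a₀·a³ for some a₀ ∈ ℂ and some linear form a. -/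
open MvPolynomial

/-- Embed a polynomial in `x₁,x₂,x₃` into the six-variable ring (variables `0,1,2` are
the `x`'s, variables `3,4,5` are the border variables `u₁,u₂,u₃`). -/
noncomputable def toSix (p : MvPolynomial (Fin 3) ℂ) : MvPolynomial (Fin 6) ℂ :=
  rename (fun i : Fin 3 => (⟨(i : ℕ), by omega⟩ : Fin 6)) p

/-- The bordered Hessian of a ternary form `f` with border `(u₁,u₂,u₃)`, as a polynomial
in the six variables `x₁,x₂,x₃,u₁,u₂,u₃`: the determinant of the 4×4 matrix whose
upper-left 3×3 block is `(∂ᵢ∂ⱼ f)` and whose last row and column are `(u₁,u₂,u₃,0)`. -/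
noncomputable def borderedHessian (f : MvPolynomial (Fin 3) ℂ) : MvPolynomial (Fin 6) ℂ :=
  Matrix.det (Matrix.of fun i j : Fin 4 =>
    if hi : (i : ℕ) < 3 then
      if hj : (j : ℕ) < 3 then
        toSix (pderiv ⟨(i : ℕ), hi⟩ (pderiv ⟨(j : ℕ), hj⟩ f))
      else X (⟨(i : ℕ) + 3, by omega⟩ : Fin 6)
    else
      if hj : (j : ℕ) < 3 then X (⟨(j : ℕ) + 3, by omega⟩ : Fin 6)
      else 0)

lemma pderiv_comm_aux (i j : Fin 3) (f : MvPolynomial (Fin 3) ℂ) :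
    pderiv i (pderiv j f) = pderiv j (pderiv i f) := by
  have h : ⁅(pderiv i : Derivation ℂ (MvPolynomial (Fin 3) ℂ) (MvPolynomial (Fin 3) ℂ)),
      (pderiv j : Derivation ℂ (MvPolynomial (Fin 3) ℂ) (MvPolynomial (Fin 3) ℂ))⁆ = 0 := by
    refine MvPolynomial.derivation_ext fun k => ?_
    rw [Derivation.commutator_apply]
    by_cases h1 : k = i <;> by_cases h2 : k = j <;> simp [pderiv_X, Pi.single_apply, h1, h2] <;>
      split_ifs <;> simp
  have h' := congrArg (fun D => D f) h
  simpa [Derivation.commutator_apply, sub_eq_zero] using h'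

lemma bh_expand (f : MvPolynomial (Fin 3) ℂ) : borderedHessian f =
    -(X 3 ^ 2 * (toSix (pderiv 1 (pderiv 1 f)) * toSix (pderiv 2 (pderiv 2 f))
          - toSix (pderiv 1 (pderiv 2 f)) ^ 2)
      + X 4 ^ 2 * (toSix (pderiv 0 (pderiv 0 f)) * toSix (pderiv 2 (pderiv 2 f))
          - toSix (pderiv 0 (pderiv 2 f)) ^ 2)
      + X 5 ^ 2 * (toSix (pderiv 0 (pderiv 0 f)) * toSix (pderiv 1 (pderiv 1 f))
          - toSix (pderiv 0 (pderiv 1 f)) ^ 2)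
      + 2 * X 3 * X 4 * (toSix (pderiv 0 (pderiv 2 f)) * toSix (pderiv 1 (pderiv 2 f))
          - toSix (pderiv 0 (pderiv 1 f)) * toSix (pderiv 2 (pderiv 2 f)))
      + 2 * X 3 * X 5 * (toSix (pderiv 0 (pderiv 1 f)) * toSix (pderiv 1 (pderiv 2 f))
          - toSix (pderiv 0 (pderiv 2 f)) * toSix (pderiv 1 (pderiv 1 f)))
      + 2 * X 4 * X 5 * (toSix (pderiv 0 (pderiv 1 f)) * toSix (pderiv 0 (pderiv 2 f))
          - toSix (pderiv 0 (pderiv 0 f)) * toSix (pderiv 1 (pderiv 2 f)))) := by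
  have e : (Matrix.of fun i j : Fin 4 =>
    if hi : (i : ℕ) < 3 then
      if hj : (j : ℕ) < 3 then
        toSix (pderiv ⟨(i : ℕ), hi⟩ (pderiv ⟨(j : ℕ), hj⟩ f))
      else X (⟨(i : ℕ) + 3, by omega⟩ : Fin 6)
    else
      if hj : (j : ℕ) < 3 then X (⟨(j : ℕ) + 3, by omega⟩ : Fin 6)
      else 0) =
    !![toSix (pderiv 0 (pderiv 0 f)), toSix (pderiv 0 (pderiv 1 f)),
        toSix (pderiv 0 (pderiv 2 f)), X 3;
       toSix (pderiv 1 (pderiv 0 f)), toSix (pderiv 1 (pderiv 1 f)),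
        toSix (pderiv 1 (pderiv 2 f)), X 4;
       toSix (pderiv 2 (pderiv 0 f)), toSix (pderiv 2 (pderiv 1 f)),
        toSix (pderiv 2 (pderiv 2 f)), X 5;
       X 3, X 4, X 5, 0] := by
    ext1 i j
    fin_cases i <;> fin_cases j <;> rfl
  rw [borderedHessian, e, pderiv_comm_aux 1 0, pderiv_comm_aux 2 0, pderiv_comm_aux 2 1]
  simp [Matrix.det_succ_row_zero, Fin.sum_univ_succ, Fin.succAbove]
  ring

lemma aeval_toSix (p u : Fin 3 → MvPolynomial (Fin 3) ℂ) (q : MvPolynomial (Fin 3) ℂ) :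
    aeval ![p 0, p 1, p 2, u 0, u 1, u 2] (toSix q) = aeval p q := by
  rw [toSix, aeval_rename]
  congr 2
  ext1 i
  fin_cases i <;> rfl

lemma key (f : MvPolynomial (Fin 3) ℂ) (h : borderedHessian f = 0)
    (p x y : Fin 3 → MvPolynomial (Fin 3) ℂ) :
    let B : (Fin 3 → MvPolynomial (Fin 3) ℂ) → (Fin 3 → MvPolynomial (Fin 3) ℂ) →
      MvPolynomial (Fin 3) ℂ := fun a b =>
        ∑ i, ∑ j, a i * b j * aeval p (pderiv i (pderiv j f))
    B x x * B y y = B x y ^ 2 := by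
  intro B
  have := congrArg (aeval ![p 0, p 1, p 2, x 1 * y 2 - x 2 * y 1,
    x 2 * y 0 - x 0 * y 2, x 0 * y 1 - x 1 * y 0]) h
  have a6 := aeval_toSix p ![x 1 * y 2 - x 2 * y 1,
    x 2 * y 0 - x 0 * y 2, x 0 * y 1 - x 1 * y 0]
  simp only [Matrix.cons_val] at a6
  rw [bh_expand] at this
  simp only [map_neg, map_add, map_sub, map_mul, map_pow, a6, map_zero, aeval_X, map_ofNat,
    Matrix.cons_val] at this
  simp only [B, Fin.sum_univ_three]
  rw [pderiv_comm_aux 1 0, pderiv_comm_aux 2 0, pderiv_comm_aux 2 1]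
  linear_combination -this

lemma linear_expand (q : MvPolynomial (Fin 3) ℂ) (hq : q.IsHomogeneous 1) :
    ∃ c : Fin 3 → ℂ, (∀ k, pderiv k q = C (c k)) ∧ q = ∑ k, C (c k) * X k := by
  have h0 : ∀ k, ∃ c : ℂ, pderiv k q = C c := fun k => by
    have : (pderiv k q).IsHomogeneous 0 := hq.pderiv
    exact ⟨_, totalDegree_eq_zero_iff_eq_C.1 (by simpa using this.totalDegree_le)⟩
  choose c hc using h0
  refine ⟨c, hc, ?_⟩
  have := hq.sum_X_mul_pderiv
  simp only [hc, one_smul] at this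
  rw [← this]
  exact Finset.sum_congr rfl fun _ _ => mul_comm _ _

lemma forward (f : MvPolynomial (Fin 3) ℂ) (hf : f.IsHomogeneous 3)
    (h : borderedHessian f = 0) :
    ∃ a₀ : ℂ, ∃ a : MvPolynomial (Fin 3) ℂ, IsLinearForm a ∧ f = C a₀ * a ^ 3 := by
  by_cases hf0 : f = 0
  · exact ⟨0, 0, isHomogeneous_zero _ _ _, by simp [hf0]⟩
  obtain ⟨v, hv⟩ : ∃ v, eval v f ≠ 0 := by
    by_contra! hc
    exact hf0 (MvPolynomial.funext fun x => by simpa using hc x)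
  have hH : ∀ i j, (pderiv i (pderiv j f)).IsHomogeneous 1 := fun i j => hf.pderiv.pderiv
  choose c hc1 hc2 using fun i j => linear_expand _ (hH i j)
  have s1 : ∀ i j k, c i j k = c j i k := fun i j k => by
    apply C_injective (Fin 3) ℂ
    rw [← hc1, ← hc1, pderiv_comm_aux i j]
  have s2 : ∀ i j k, c i j k = c k j i := fun i j k => by
    apply C_injective (Fin 3) ℂ
    rw [← hc1, ← hc1, pderiv_comm_aux k i]
  -- Euler
  have e1 : ∀ j, ∑ i, X i * pderiv i (pderiv j f) = 2 * pderiv j f := fun j => by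
    have := (hf.pderiv (i := j)).sum_X_mul_pderiv
    simpa [two_smul, two_mul] using this
  have e0 : ∑ i, X i * pderiv i f = 3 * f := by
    have := hf.sum_X_mul_pderiv
    simpa [nsmul_eq_mul] using this
  have E : 6 * f = ∑ j, ∑ i, X i * X j * pderiv i (pderiv j f) := by
    have : 6 * f = 2 * ∑ i, X i * pderiv i f := by rw [e0]; ring
    rw [this, Finset.mul_sum]
    refine Finset.sum_congr rfl fun j _ => ?_
    rw [mul_left_comm, ← e1, Finset.mul_sum]
    exact Finset.sum_congr rfl fun i _ => by ring
  set l : MvPolynomial (Fin 3) ℂ := ∑ k, C (∑ i, ∑ j, c i j k * v i * v j) * X k with hl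
  have hlin : l.IsHomogeneous 1 := by
    refine IsHomogeneous.sum _ _ _ fun k _ => ?_
    simpa using (isHomogeneous_C (Fin 3) (∑ i, ∑ j, c i j k * v i * v j)).mul
      (isHomogeneous_X ℂ k)
  set t : ℂ := 6 * eval v f with ht
  have ht0 : t ≠ 0 := mul_ne_zero (by norm_num) hv
  have ht' : t = ∑ j, ∑ i, v i * v j * ∑ k, c i j k * v k := by
    have := congrArg (eval v) E
    simp only [hc2] at this
    simpa [ht] using this
  have hlv : eval v l = t := by
    rw [ht', hl]
    simp only [Fin.sum_univ_three, map_add, map_mul, eval_C, eval_X]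
    ring
  have hl0 : l ≠ 0 := by
    intro h0
    rw [h0] at hlv
    exact ht0 (by simpa using hlv.symm)
  have k1 := key f h X X (fun i => C (v i))
  have k2 := key f h (fun i => C (v i)) X (fun i => C (v i))
  simp only [aeval_X_left, AlgHom.id_apply] at k1
  have n010 : c 0 1 0 = c 0 0 1 := ((s1 0 1 0).trans (s2 1 0 0))
  have n020 : c 0 2 0 = c 0 0 2 := ((s1 0 2 0).trans (s2 2 0 0))
  have n021 : c 0 2 1 = c 0 1 2 := (((s1 0 2 1).trans (s2 2 0 1)).trans (s1 1 0 2))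
  have n100 : c 1 0 0 = c 0 0 1 := (s2 1 0 0)
  have n101 : c 1 0 1 = c 0 1 1 := (s1 1 0 1)
  have n102 : c 1 0 2 = c 0 1 2 := (s1 1 0 2)
  have n110 : c 1 1 0 = c 0 1 1 := (s2 1 1 0)
  have n120 : c 1 2 0 = c 0 1 2 := ((s1 1 2 0).trans (s2 2 1 0))
  have n121 : c 1 2 1 = c 1 1 2 := ((s1 1 2 1).trans (s2 2 1 1))
  have n200 : c 2 0 0 = c 0 0 2 := (s2 2 0 0)
  have n201 : c 2 0 1 = c 0 1 2 := ((s2 2 0 1).trans (s1 1 0 2))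
  have n202 : c 2 0 2 = c 0 2 2 := (s1 2 0 2)
  have n210 : c 2 1 0 = c 0 1 2 := (s2 2 1 0)
  have n211 : c 2 1 1 = c 1 1 2 := (s2 2 1 1)
  have n212 : c 2 1 2 = c 1 2 2 := (s1 2 1 2)
  have n220 : c 2 2 0 = c 0 2 2 := (s2 2 2 0)
  have n221 : c 2 2 1 = c 1 2 2 := (s2 2 2 1)
  have b1 : ∑ x, ∑ y, C (v x) * C (v y) * pderiv x (pderiv y f) = l := by
    rw [hl]
    simp only [hc2, Fin.sum_univ_three, map_add, map_mul, n010, n020, n021, n100, n101, n102, n110, n120, n121, n200, n201, n202, n210, n211, n212, n220, n221]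
    ring
  set q : MvPolynomial (Fin 3) ℂ := ∑ i, ∑ j, ∑ k, C (c i j k * v k) * X i * X j with hq
  have a1 : 6 * f * l = q ^ 2 := by
    have b2 : ∑ x, ∑ y, X x * C (v y) * pderiv x (pderiv y f) = q := by
      rw [hq]
      simp only [hc2, Fin.sum_univ_three, map_mul, n010, n020, n021, n100, n101, n102, n110, n120, n121, n200, n201, n202, n210, n211, n212, n220, n221]
      ring
    rw [b1, b2] at k1
    rw [E, Finset.sum_comm]
    exact k1
  have a2 : q * C t = l ^ 2 := by
    have hv2 : ∀ i j, aeval (fun i => (C (v i) : MvPolynomial (Fin 3) ℂ)) (pderiv i (pderiv j f))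
        = ∑ k, C (c i j k) * C (v k) := fun i j => by
      rw [hc2]
      simp [algebraMap_eq]
    simp only [hv2] at k2
    have b3 : ∑ i, ∑ j, X i * X j * ∑ k, C (c i j k) * C (v k) = q := by
      rw [hq]
      simp only [Fin.sum_univ_three, map_mul]
      ring
    have b4 : ∑ i, ∑ j, C (v i) * C (v j) * ∑ k, C (c i j k) * C (v k)
        = (C t : MvPolynomial (Fin 3) ℂ) := by
      rw [ht']
      simp only [Fin.sum_univ_three, map_add, map_mul]
      ring
    have b5 : ∑ i, ∑ j, X i * C (v j) * ∑ k, C (c i j k) * C (v k) = l := by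
      rw [hl]
      simp only [Fin.sum_univ_three, map_add, map_mul, n010, n020, n021, n100, n101, n102, n110, n120, n121, n200, n201, n202, n210, n211, n212, n220, n221]
      ring
    rw [b3, b4, b5] at k2
    exact k2
  have a3 : 6 * C t ^ 2 * f = l ^ 3 := by
    apply mul_right_cancel₀ hl0
    linear_combination C t ^ 2 * a1 + (q * C t + l ^ 2) * a2
  refine ⟨(6 * t ^ 2)⁻¹, l, hlin, ?_⟩
  rw [← a3]
  have : C (6 * t ^ 2)⁻¹ * (6 * C t ^ 2 : MvPolynomial (Fin 3) ℂ) = 1 := by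
    have : (6 * C t ^ 2 : MvPolynomial (Fin 3) ℂ) = C (6 * t ^ 2) := by
      rw [← C_pow, C_mul (a := 6) (a' := t ^ 2)]; rfl
    rw [this, ← C_mul, inv_mul_cancel₀ (mul_ne_zero (by norm_num) (pow_ne_zero 2 ht0)), C_1]
  linear_combination -f * this

lemma backward (a₀ : ℂ) (a : MvPolynomial (Fin 3) ℂ) (ha : a.IsHomogeneous 1) :
    borderedHessian (C a₀ * a ^ 3) = 0 := by
  obtain ⟨c, hc, -⟩ := linear_expand a ha
  have H : ∀ i j, pderiv i (pderiv j (C a₀ * a ^ 3)) = 6 * C a₀ * a * C (c i) * C (c j) := by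
    intro i j
    have h3 : pderiv i (3 : MvPolynomial (Fin 3) ℂ) = 0 := pderiv_C (a := (3 : ℂ))
    simp [hc, h3]
    ring
  rw [bh_expand]
  simp only [H, toSix, map_mul]
  ring

theorem stmt5 (f : MvPolynomial (Fin 3) ℂ) (hf : f.IsHomogeneous 3) :
    borderedHessian f = 0 ↔
      ∃ a₀ : ℂ, ∃ a : MvPolynomial (Fin 3) ℂ, IsLinearForm a ∧ f = C a₀ * a ^ 3 := by
  constructor
  · exact forward f hf
  · rintro ⟨a₀, a, ha, rfl⟩
    exact backward a₀ a ha
end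

section
/- Let f be a ternary cubic form over ℂ. Then f = a·b² for some linear forms a, b if and only if for all y, z ∈ ℂ³ the restriction of f to the line through y and z, i.e. the binary cubic p(s,t) = f(s·y + t·z) = c₃s³ + c₂s²t + c₁st² + c₀t³, has vanishing discriminant c₂²c₁² − 4c₃c₁³ − 4c₂³c₀ + 18c₃c₂c₁c₀ − 27c₃²c₀² = 0. -/
open MvPolynomial

/-- The restriction of a ternary form `f` to the line through `y` and `z`:
the binary form `p(s,t) = f(s·y + t·z)` in the two variables `s = X 0`, `t = X 1`. -/
noncomputable def lineRestrict (f : MvPolynomial (Fin 3) ℂ) (y z : Fin 3 → ℂ) :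
    MvPolynomial (Fin 2) ℂ :=
  aeval (fun i : Fin 3 => C (y i) * X 0 + C (z i) * X 1) f

/-- The discriminant `c₂²c₁² − 4c₃c₁³ − 4c₂³c₀ + 18c₃c₂c₁c₀ − 27c₃²c₀²` of a binary
cubic `c₃s³ + c₂s²t + c₁st² + c₀t³`. -/
noncomputable def binCubicDisc (p : MvPolynomial (Fin 2) ℂ) : ℂ :=
  let c₃ := p.coeff (Finsupp.single 0 3)
  let c₂ := p.coeff (Finsupp.single 0 2 + Finsupp.single 1 1)
  let c₁ := p.coeff (Finsupp.single 0 1 + Finsupp.single 1 2)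
  let c₀ := p.coeff (Finsupp.single 1 3)
  c₂ ^ 2 * c₁ ^ 2 - 4 * c₃ * c₁ ^ 3 - 4 * c₂ ^ 3 * c₀ + 18 * c₃ * c₂ * c₁ * c₀ -
    27 * c₃ ^ 2 * c₀ ^ 2

/-- Discriminant of an explicitly given binary cubic. -/
lemma binCubicDisc_explicit (a b c d : ℂ) :
    binCubicDisc (C a * X 0 ^ 3 + C b * X 0 ^ 2 * X 1 + C c * X 0 * X 1 ^ 2 + C d * X 1 ^ 3) =
      b ^ 2 * c ^ 2 - 4 * a * c ^ 3 - 4 * b ^ 3 * d + 18 * a * b * c * d - 27 * a ^ 2 * d ^ 2 := by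
  have h : (C a * X 0 ^ 3 + C b * X 0 ^ 2 * X 1 + C c * X 0 * X 1 ^ 2 + C d * X 1 ^ 3 :
      MvPolynomial (Fin 2) ℂ) = monomial (Finsupp.single 0 3) a
        + monomial (Finsupp.single 0 2 + Finsupp.single 1 1) b
        + monomial (Finsupp.single 0 1 + Finsupp.single 1 2) c
        + monomial (Finsupp.single 1 3) d := by
    have e : ∀ (m n : ℕ) (r : ℂ), (monomial (Finsupp.single 0 m + Finsupp.single 1 n) r :
        MvPolynomial (Fin 2) ℂ) = C r * X 0 ^ m * X 1 ^ n := by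
      intro m n r
      rw [X_pow_eq_monomial, X_pow_eq_monomial, C_mul_monomial, monomial_mul]
      simp
    have e1 := e 3 0 a
    have e2 := e 0 3 d
    simp only [Finsupp.single_zero, add_zero, zero_add] at e1 e2
    rw [e, e, e1, e2]
    ring
  rw [h]
  unfold binCubicDisc
  simp [coeff_monomial, Finsupp.ext_iff, Fin.forall_fin_two, Finsupp.single_apply]

/-- Restriction of a linear form. -/
lemma lineRestrict_linear (a : MvPolynomial (Fin 3) ℂ) (ha : a.IsHomogeneous 1)
    (y z : Fin 3 → ℂ) :
    lineRestrict a y z = C (eval y a) * X 0 + C (eval z a) * X 1 := by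
  have h : a ∈ homogeneousSubmodule (Fin 3) ℂ 1 := ha
  rw [homogeneousSubmodule_one_eq_span_X] at h
  unfold lineRestrict
  induction h using Submodule.span_induction with
  | mem x hx => obtain ⟨i, rfl⟩ := hx; simp
  | zero => simp
  | add x y _ _ hx hy =>
    simp only [map_add]
    rw [hx, hy]
    · ring
    all_goals (rw [← mem_homogeneousSubmodule, homogeneousSubmodule_one_eq_span_X]; assumption)
  | smul r x _ hx =>
    rw [map_smul, hx]
    · simp only [smul_eq_C_mul, map_mul, eval_C]; ring
    · rw [← mem_homogeneousSubmodule, homogeneousSubmodule_one_eq_span_X]; assumption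

lemma lineRestrict_mul (a b : MvPolynomial (Fin 3) ℂ) (y z : Fin 3 → ℂ) :
    lineRestrict (a * b) y z = lineRestrict a y z * lineRestrict b y z := by
  simp [lineRestrict]

lemma lineRestrict_add (a b : MvPolynomial (Fin 3) ℂ) (y z : Fin 3 → ℂ) :
    lineRestrict (a + b) y z = lineRestrict a y z + lineRestrict b y z := by
  simp [lineRestrict]

/-- The coefficients of the restriction are forms in `z`. -/
def HasExpansion (y : Fin 3 → ℂ) (f : MvPolynomial (Fin 3) ℂ) : Prop :=
  ∃ p q : MvPolynomial (Fin 3) ℂ, p.IsHomogeneous 1 ∧ q.IsHomogeneous 2 ∧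
    ∀ z, lineRestrict f y z = C (eval y f) * X 0 ^ 3 + C (eval z p) * X 0 ^ 2 * X 1
      + C (eval z q) * X 0 * X 1 ^ 2 + C (eval z f) * X 1 ^ 3

lemma HasExpansion.add {y : Fin 3 → ℂ} {f g : MvPolynomial (Fin 3) ℂ}
    (hf : HasExpansion y f) (hg : HasExpansion y g) : HasExpansion y (f + g) := by
  obtain ⟨p, q, hp, hq, h⟩ := hf
  obtain ⟨p', q', hp', hq', h'⟩ := hg
  refine ⟨p + p', q + q', hp.add hp', hq.add hq', fun z => ?_⟩
  rw [lineRestrict_add, h, h']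
  simp only [map_add]
  ring

lemma hasExpansion_mul (y : Fin 3 → ℂ) {a b c : MvPolynomial (Fin 3) ℂ}
    (ha : a.IsHomogeneous 1) (hb : b.IsHomogeneous 1) (hc : c.IsHomogeneous 1) :
    HasExpansion y (a * b * c) := by
  refine ⟨C (eval y a * eval y b) * c + C (eval y a * eval y c) * b + C (eval y b * eval y c) * a,
    C (eval y a) * (b * c) + C (eval y b) * (a * c) + C (eval y c) * (a * b),
    ((hc.C_mul _).add (hb.C_mul _)).add (ha.C_mul _),
    (((hb.mul hc).C_mul _).add ((ha.mul hc).C_mul _)).add ((ha.mul hb).C_mul _), fun z => ?_⟩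
  rw [lineRestrict_mul, lineRestrict_mul, lineRestrict_linear a ha, lineRestrict_linear b hb,
    lineRestrict_linear c hc]
  simp only [map_add, map_mul, eval_C]
  ring

lemma hasExpansion_of_cubic (y : Fin 3 → ℂ) {f : MvPolynomial (Fin 3) ℂ}
    (hf : f.IsHomogeneous 3) : HasExpansion y f := by
  have h : f ∈ homogeneousSubmodule (Fin 3) ℂ 3 := hf
  rw [← homogeneousSubmodule_one_pow, pow_succ, pow_two] at h
  induction h using Submodule.mul_induction_on' with
  | mem_mul_mem m hm n hn =>
    clear hf
    induction hm using Submodule.mul_induction_on' with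
    | mem_mul_mem a ha b hb => exact hasExpansion_mul y ha hb hn
    | add a _ b _ ha hb => rw [add_mul]; exact ha.add hb
  | add a ha b hb iha ihb =>
    have key : ∀ x ∈ homogeneousSubmodule (Fin 3) ℂ 1 * homogeneousSubmodule (Fin 3) ℂ 1 *
        homogeneousSubmodule (Fin 3) ℂ 1, x.IsHomogeneous 3 := by
      intro x hx
      rw [← pow_two, ← pow_succ, homogeneousSubmodule_one_pow] at hx
      exact hx
    exact (iha (key a ha)).add (ihb (key b hb))

/-- A square root of a quadratic form is a linear form. -/
lemma isHomogeneous_of_sq {w A : MvPolynomial (Fin 3) ℂ} (hA : A.IsHomogeneous 2)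
    (h : w * w = A) : w.IsHomogeneous 1 := by
  by_cases hw : w = 0
  · rw [hw]; exact isHomogeneous_zero _ _ _
  have hd : w.totalDegree ≤ 1 := by
    have h1 := totalDegree_mul_of_isDomain hw hw
    have h2 := hA.totalDegree_le
    rw [h] at h1
    omega
  have h0 : coeff 0 w = 0 := by
    have h1 : constantCoeff A = 0 := hA.coeff_eq_zero (by simp)
    rw [← h, map_mul] at h1
    exact mul_self_eq_zero.mp h1
  have hs : homogeneousComponent 1 w = w := by
    ext d
    rw [coeff_homogeneousComponent]
    split_ifs with hd1
    · rfl
    · by_contra hne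
      have hm : d ∈ w.support := mem_support_iff.mpr (Ne.symm hne)
      have hle := (le_totalDegree hm).trans hd
      have : d.degree ≤ 1 := hle
      have hz : d.degree = 0 := by omega
      rw [Finsupp.degree_eq_zero_iff] at hz
      rw [hz] at hne
      exact hne h0.symm
  rw [← hs]
  exact homogeneousComponent_isHomogeneous _ _

lemma exists_root {A B : MvPolynomial (Fin 3) ℂ} (h : B ^ 2 = 4 * A ^ 3) :
    ∃ w, w * w = 4 * A ∧ B = A * w := by
  by_cases hA : A = 0
  · subst hA
    refine ⟨0, by simp, ?_⟩
    have : B ^ 2 = 0 := by rw [h]; ring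
    simpa using this
  have hdvd : A ^ 2 ∣ B ^ 2 := ⟨4 * A, by rw [h]; ring⟩
  rw [IsIntegrallyClosed.pow_dvd_pow_iff two_ne_zero] at hdvd
  obtain ⟨w, rfl⟩ := hdvd
  refine ⟨w, ?_, rfl⟩
  apply mul_left_cancel₀ (pow_ne_zero 2 hA)
  linear_combination h

theorem stmt7 (f : MvPolynomial (Fin 3) ℂ) (hf : f.IsHomogeneous 3) :
    (∃ a b : MvPolynomial (Fin 3) ℂ, IsLinearForm a ∧ IsLinearForm b ∧ f = a * b ^ 2) ↔
      ∀ y z : Fin 3 → ℂ, binCubicDisc (lineRestrict f y z) = 0 := by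
  constructor
  · rintro ⟨a, b, ha, hb, rfl⟩ y z
    rw [pow_two, lineRestrict_mul, lineRestrict_mul, lineRestrict_linear a ha,
      lineRestrict_linear b hb]
    generalize eval y a = α
    generalize eval z a = β
    generalize eval y b = γ
    generalize eval z b = δ
    have := binCubicDisc_explicit (α * γ ^ 2) (2 * α * γ * δ + β * γ ^ 2)
      (α * δ ^ 2 + 2 * β * γ * δ) (β * δ ^ 2)
    convert this using 1
    · congr 1
      simp only [map_add, map_mul, map_pow]
      rw [show (C 2 : MvPolynomial (Fin 2) ℂ) = 2 from map_ofNat C 2]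
      ring
    · ring
  · intro h
    by_cases hf0 : f = 0
    · exact ⟨0, 0, isHomogeneous_zero _ _ _, isHomogeneous_zero _ _ _, by simp [hf0]⟩
    obtain ⟨y, hy⟩ : ∃ y, eval y f ≠ 0 := by
      by_contra hcon
      push Not at hcon
      exact hf0 (MvPolynomial.funext fun x => by simp [hcon x])
    obtain ⟨p, q, hp, hq, hexp⟩ := hasExpansion_of_cubic y hf
    set k := eval y f with hk
    have hB : (2 * p ^ 3 - 9 * C k * p * q + 27 * C k ^ 2 * f) ^ 2
        = 4 * (p ^ 2 - 3 * C k * q) ^ 3 := by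
      apply MvPolynomial.funext
      intro z
      have hz := h y z
      rw [hexp z, binCubicDisc_explicit] at hz
      simp only [map_add, map_sub, map_mul, map_pow, eval_C, map_ofNat]
      linear_combination (-27 * k ^ 2) * hz
    obtain ⟨w, hw, hBw⟩ := exists_root hB
    have hfour : (4 : MvPolynomial (Fin 3) ℂ) = C 4 := (map_ofNat C 4).symm
    have htwo : (2 : MvPolynomial (Fin 3) ℂ) = C 2 := (map_ofNat C 2).symm
    have hthree : (3 : MvPolynomial (Fin 3) ℂ) = C 3 := (map_ofNat C 3).symm
    have hA : (4 * (p ^ 2 - 3 * C k * q)).IsHomogeneous 2 := by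
      rw [hfour, hthree, ← C_mul]
      exact ((hp.pow 2).sub (hq.C_mul _)).C_mul _
    have hwl := isHomogeneous_of_sq hA hw
    refine ⟨C (108 * k ^ 2)⁻¹ * (p + w), 2 * p - w, (hp.add hwl).C_mul _, ?_, ?_⟩
    · rw [htwo]; exact (hp.C_mul _).sub hwl
    · have hne : (108 * k ^ 2 : ℂ) ≠ 0 := mul_ne_zero (by norm_num) (pow_ne_zero 2 hy)
      have key : C (108 * k ^ 2) * f = (p + w) * (2 * p - w) ^ 2 := by
        simp only [map_mul, map_pow, map_ofNat]
        linear_combination 4 * hBw + (3 * p - w) * hw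
      rw [mul_assoc, ← key, ← mul_assoc, ← C_mul, inv_mul_cancel₀ hne]
      simp
end
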